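/- arXiv:1209.2218 — 3 statements merged into one kernel-verified Lean document; each statement's English description precedes it below -/
import Mathlib

section
/- Every forest T on n ≥ 1 vertices has product dimension at most 1.441 log₂ n + 3. -/
/-- `φ : V → Fin l → ℕ` is an `l`-encoding of `G`. -/
def IsEncoding {V : Type*} (G : SimpleGraph V) (l : ℕ) (φ : V → Fin l → ℕ) : Prop :=
  Function.Injective φ ∧ ∀ u v : V, u ≠ v → (G.Adj u v ↔ ∀ i, φ u i ≠ φ v i)

/-- The product dimension of a graph. -/
noncomputable def pdim {V : Type*} (G : SimpleGraph V) : ℕ :=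
  sInf {l | ∃ φ : V → Fin l → ℕ, IsEncoding G l φ}

/-!
Fix a proper 2-colouring of the forest and ask only that the coordinates decide adjacency between
vertices of opposite colours; two further coordinates, the colour and an injective label, turn this
into an encoding. The point is that encodings of two vertex sets which share a single vertex `v`
and have no other edges between them can be merged at the cost of one coordinate. A forest splits
at a centroid `v` into branches of at most half its size. If it has at most `fib (l + 4)` vertices,
either its branches fall into two groups which together with `v` have at most `fib (l + 3)` vertices
each, or into three groups which together with `v` have at most `fib (l + 2)` vertices each. One
merge in the first case and two in the second show by induction that a forest with at most
`fib (l + 2)` vertices needs only `l` coordinates, hence has product dimension at most `l + 2`.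
Since `fib (l + 2)` is at least the `l`-th power of the golden ratio `φ`, a forest on `n` vertices
has product dimension at most `log_φ n + 3`.
-/

open Finset

section CrossEncoding

/-- The coordinates of `φ` decide the adjacency of `G` between vertices of `S` of opposite colours
under `side`. Pairs of the same colour are unconstrained, and `φ` need not be injective. -/
def IsCrossEncoding {V : Type*} (G : SimpleGraph V) (side : V → Bool) (S : Set V) {l : ℕ}
    (φ : V → Fin l → ℕ) : Prop :=
  ∀ x ∈ S, ∀ y ∈ S, side x ≠ side y → (G.Adj x y ↔ ∀ i, φ x i ≠ φ y i)

/-- `S` has a cross encoding with `l` coordinates. -/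
def CrossEncodable {V : Type*} (G : SimpleGraph V) (side : V → Bool) (S : Set V) (l : ℕ) : Prop :=
  ∃ φ : V → Fin l → ℕ, IsCrossEncoding G side S φ

lemma boolToNat_injective : Function.Injective Bool.toNat := by
  decide

lemma forall_cons_ne_cons_iff {α : Type*} {n : ℕ} {a b : α} {p q : Fin n → α} :
    (∀ i, Fin.cons (α := fun _ ↦ α) a p i ≠ Fin.cons (α := fun _ ↦ α) b q i) ↔
      a ≠ b ∧ ∀ i, p i ≠ q i := by
  simp only [Fin.forall_fin_succ, Fin.cons_zero, Fin.cons_succ]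

namespace CrossEncodable

variable {V ι : Type*} {G : SimpleGraph V} {side : V → Bool} {S T A B : Set V} {v : V} {l : ℕ}

lemma mono (hT : CrossEncodable G side T l) (hST : S ⊆ T) : CrossEncodable G side S l := by
  obtain ⟨φ, hφ⟩ := hT
  exact ⟨φ, fun x hx y hy ↦ hφ x (hST hx) y (hST hy)⟩

lemma succ (h : CrossEncodable G side S l) : CrossEncodable G side S (l + 1) := by
  obtain ⟨φ, hφ⟩ := h
  refine ⟨fun x ↦ Fin.cons (side x).toNat (φ x), fun x hx y hy hxy ↦ ?_⟩
  have hside : (side x).toNat ≠ (side y).toNat := fun h ↦ hxy (boolToNat_injective h)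
  rw [forall_cons_ne_cons_iff, hφ x hx y hy hxy, and_iff_right hside]

lemma of_subsingleton (hS : S.Subsingleton) : CrossEncodable G side S l :=
  ⟨fun _ _ ↦ 0, fun _ hx _ hy hxy ↦ absurd (congrArg side (hS hx hy)) hxy⟩

lemma of_card_le_two {S : Finset V} (hS : #S ≤ 2) : CrossEncodable G side S 1 := by
  by_cases hadj : ∀ x ∈ S, ∀ y ∈ S, side x ≠ side y → G.Adj x y
  · refine ⟨fun x _ ↦ (side x).toNat, fun x hx y hy hxy ↦ ?_⟩
    exact iff_of_true (hadj x hx y hy hxy) fun _ h ↦ hxy (boolToNat_injective h)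
  · push Not at hadj
    obtain ⟨a, ha, b, hb, hab, hnadj⟩ := hadj
    refine ⟨fun _ _ ↦ 0, fun x hx y hy hxy ↦ iff_of_false (fun h ↦ hnadj ?_) (by simp)⟩
    have hmem : ∀ z ∈ S, z = a ∨ z = b := by
      intro z hz
      by_contra! hne
      have : 2 < #S :=
        two_lt_card.2 ⟨a, ha, b, hb, z, hz, ne_of_apply_ne side hab, hne.1.symm, hne.2.symm⟩
      omega
    rcases hmem x hx with rfl | rfl <;> rcases hmem y hy with rfl | rfl
    exacts [absurd rfl hxy, h, h.symm, absurd rfl hxy]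

lemma exists_eq_zero_at (h : CrossEncodable G side S l) (v : V) :
    ∃ φ : V → Fin l → ℕ, (∀ i, φ v i = 0) ∧ IsCrossEncoding G side S φ := by
  obtain ⟨φ, hφ⟩ := h
  refine ⟨fun x i ↦ Equiv.swap (φ v i) 0 (φ x i), fun i ↦ Equiv.swap_apply_left _ _, ?_⟩
  simpa only [IsCrossEncoding, ne_eq, EmbeddingLike.apply_eq_iff_eq] using hφ

/- The extra coordinate is the colour on `A` and the opposite colour on `B`, so that it separates
opposite colours within each set and identifies them across the two sets. -/
lemma union (hvA : v ∈ A) (hvB : v ∈ B) (hAB : A ∩ B ⊆ {v})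
    (hno : ∀ a ∈ A \ {v}, ∀ b ∈ B \ {v}, ¬ G.Adj a b)
    (hA : CrossEncodable G side A l) (hB : CrossEncodable G side B l) :
    CrossEncodable G side (A ∪ B) (l + 1) := by
  classical
  obtain ⟨α, hαv, hα⟩ := hA.exists_eq_zero_at v
  obtain ⟨β, hβv, hβ⟩ := hB.exists_eq_zero_at v
  let ψ : V → Fin l → ℕ := A.piecewise α β
  let c : V → ℕ := fun x ↦ if x = v then 2 else if x ∈ A then (side x).toNat else (!side x).toNat
  have hψA : ∀ x ∈ A, ψ x = α x := fun x hx ↦ A.piecewise_eq_of_mem α β hx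
  have hψB : ∀ x ∈ B, ψ x = β x := by
    intro x hx
    by_cases hxA : x ∈ A
    · obtain rfl : x = v := hAB ⟨hxA, hx⟩
      rw [hψA x hxA]
      exact funext fun i ↦ (hαv i).trans (hβv i).symm
    · exact A.piecewise_eq_of_notMem α β hxA
  have hmeet : ∀ x ∈ A, x ∈ B → x = v := fun x hxA hxB ↦ hAB ⟨hxA, hxB⟩
  have hcA : ∀ x ∈ A, ∀ y ∈ A, side x ≠ side y → c x ≠ c y := by
    grind [Bool.toNat]
  have hcB : ∀ x ∈ B, ∀ y ∈ B, side x ≠ side y → c x ≠ c y := by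
    grind [Bool.toNat]
  have hcAB : ∀ x ∈ A \ {v}, ∀ y ∈ B \ {v}, side x ≠ side y → c x = c y := by
    grind [Bool.toNat]
  refine ⟨fun x ↦ Fin.cons (c x) (ψ x), fun x hx y hy hxy ↦ ?_⟩
  rw [forall_cons_ne_cons_iff]
  have hcases : (x ∈ A ∧ y ∈ A) ∨ (x ∈ B ∧ y ∈ B) ∨
      (x ∈ A \ {v} ∧ y ∈ B \ {v}) ∨ (x ∈ B \ {v} ∧ y ∈ A \ {v}) := by
    grind
  rcases hcases with ⟨hx, hy⟩ | ⟨hx, hy⟩ | ⟨hx, hy⟩ | ⟨hx, hy⟩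
  · rw [hα x hx y hy hxy, hψA x hx, hψA y hy, and_iff_right (hcA x hx y hy hxy)]
  · rw [hβ x hx y hy hxy, hψB x hx, hψB y hy, and_iff_right (hcB x hx y hy hxy)]
  · exact iff_of_false (hno x hx y hy) fun h ↦ h.1 (hcAB x hx y hy hxy)
  · exact iff_of_false (fun h ↦ hno y hy x hx h.symm)
      fun h ↦ h.1 (hcAB y hy x hx hxy.symm).symm

lemma union_preimage {X : Set V} {f : V → ι} {P Q : Set ι}
    (hf : ∀ a ∈ X, ∀ b ∈ X, G.Adj a b → f a = f b) (hPQ : Disjoint P Q)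
    (hP : CrossEncodable G side (insert v (X ∩ f ⁻¹' P)) l)
    (hQ : CrossEncodable G side (insert v (X ∩ f ⁻¹' Q)) l) :
    CrossEncodable G side (insert v (X ∩ f ⁻¹' (P ∪ Q))) (l + 1) := by
  have hdisj := Set.disjoint_left.1 hPQ
  rw [Set.preimage_union, Set.inter_union_distrib_left, Set.insert_union_distrib]
  refine hP.union (Set.mem_insert _ _) (Set.mem_insert _ _) ?_ ?_ hQ
  · rintro x ⟨rfl | ⟨-, hxP⟩, hxQ⟩
    · rfl
    · exact hxQ.resolve_right fun h ↦ hdisj hxP h.2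
  · rintro a ⟨ha, hav⟩ b ⟨hb, hbv⟩ hab
    obtain ⟨haX, haP⟩ := ha.resolve_left hav
    obtain ⟨hbX, hbQ⟩ := hb.resolve_left hbv
    have hfab := hf a haX b hbX hab
    exact hdisj haP (by rwa [Set.mem_preimage, ← hfab] at hbQ)

end CrossEncodable

theorem pdim_le_of_crossEncodable {V : Type*} [Countable V] {G : SimpleGraph V} {l : ℕ}
    (C : G.Coloring Bool) (h : CrossEncodable G C Set.univ l) : pdim G ≤ l + 2 := by
  obtain ⟨φ, hφ⟩ := h
  obtain ⟨e, he⟩ := exists_injective_nat V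
  refine Nat.sInf_le ⟨fun x ↦ Fin.cons (C x).toNat (Fin.cons (e x) (φ x)), ?_, ?_⟩
  · intro x y hxy
    exact he (Fin.cons_inj.1 (Fin.cons_inj.1 hxy).2).1
  · intro x y hxy
    rw [forall_cons_ne_cons_iff, forall_cons_ne_cons_iff, and_iff_right (he.ne hxy),
      boolToNat_injective.ne_iff]
    constructor
    · exact fun hadj ↦ ⟨C.valid hadj, (hφ x trivial y trivial (C.valid hadj)).1 hadj⟩
    · exact fun ⟨hC, hne⟩ ↦ (hφ x trivial y trivial hC).2 hne

end CrossEncoding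

section Grouping

variable {α ι : Type*} [DecidableEq ι]

/-- Greedy bin packing: the first group is a heaviest one that still fits. -/
lemma exists_grouping {X : Finset α} {f : α → ι} {K J : ℕ} (hK : 0 < K)
    (hfib : ∀ x ∈ X, #{y ∈ X | f y = f x} < K) (hX : #X < K + J) :
    (∃ s : Finset ι, #{y ∈ X | f y ∈ s} < K ∧ #{y ∈ X | f y ∉ s} < K) ∨
    ∃ s : Finset ι, ∃ i ∉ s, #{y ∈ X | f y ∈ s} < J ∧ #{y ∈ X | f y = i} < J ∧
      #{y ∈ X | f y ∉ s ∧ f y ≠ i} < J := by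
  obtain ⟨s, hs, hmax⟩ := exists_max_image
    {s ∈ (X.image f).powerset | #{y ∈ X | f y ∈ s} < K} (fun s ↦ #{y ∈ X | f y ∈ s})
    ⟨∅, by simpa using hK⟩
  simp only [mem_filter, mem_powerset] at hs hmax
  obtain ⟨hsX, hsK⟩ := hs
  by_cases hcompl : #{y ∈ X | f y ∉ s} < K
  · exact .inl ⟨s, hsK, hcompl⟩
  obtain ⟨x, hx⟩ : ({y ∈ X | f y ∉ s} : Finset α).Nonempty := card_pos.1 (by omega)
  obtain ⟨hxX, hxs⟩ := mem_filter.1 hx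
  have hfx : f x ∈ X.image f := mem_image_of_mem f hxX
  have hpos : 0 < #{y ∈ X | f y = f x} := card_pos.2 ⟨x, mem_filter.2 ⟨hxX, rfl⟩⟩
  have hfiber_le : #{y ∈ X | f y = f x} ≤ #{y ∈ X | f y ∈ s} := by
    simpa only [mem_singleton] using hmax {f x} ⟨by simpa using hfx, by simpa using hfib x hxX⟩
  have hinsert : #{y ∈ X | f y ∈ insert (f x) s} =
      #{y ∈ X | f y = f x} + #{y ∈ X | f y ∈ s} := by
    classical
    simp only [mem_insert]
    rw [filter_or]
    refine card_union_of_disjoint (disjoint_filter.2 fun y _ hy ↦ ?_)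
    rwa [hy]
  have hoverflow : K ≤ #{y ∈ X | f y ∈ insert (f x) s} := by
    by_contra! hlt
    have := hmax (insert (f x) s) ⟨insert_subset hfx hsX, hlt⟩
    omega
  have hsplit := card_filter_add_card_filter_not (s := X) (fun y ↦ f y ∈ s)
  have hsplit' := card_filter_add_card_filter_not (s := X) (fun y ↦ f y ∈ insert (f x) s)
  have hrest : #{y ∈ X | f y ∉ s ∧ f y ≠ f x} = #{y ∈ X | f y ∉ insert (f x) s} := by
    simp only [mem_insert, not_or, and_comm, ne_eq]
  exact .inr ⟨s, f x, hxs, by omega, by omega, by omega⟩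

end Grouping

section Component

variable {V : Type*} {G : SimpleGraph V}

/-- The component of `x` in the subgraph of `G` induced on `X`, as a label on all of `V`:
every vertex outside `X` is a component of its own. -/
def inducedComponent (G : SimpleGraph V) (X : Set V) (x : V) :
    (G.induce X).spanningCoe.ConnectedComponent :=
  (G.induce X).spanningCoe.connectedComponentMk x

open scoped Classical in
/-- The vertices of `X` in the component of `x` in the subgraph of `G` induced on `X`. -/
noncomputable def componentFinset (G : SimpleGraph V) (X : Finset V) (x : V) : Finset V :=
  {y ∈ X | inducedComponent G X y = inducedComponent G X x}

lemma mem_componentFinset {X : Finset V} {x y : V} : y ∈ componentFinset G X x ↔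
    y ∈ X ∧ inducedComponent G X y = inducedComponent G X x := by
  classical exact mem_filter

lemma induce_spanningCoe_adj {X : Set V} {a b : V} :
    (G.induce X).spanningCoe.Adj a b ↔ G.Adj a b ∧ a ∈ X ∧ b ∈ X := by
  simp

lemma inducedComponent_eq_of_adj {X : Set V} {a b : V} (ha : a ∈ X) (hb : b ∈ X)
    (hab : G.Adj a b) : inducedComponent G X a = inducedComponent G X b :=
  SimpleGraph.ConnectedComponent.connectedComponentMk_eq_of_adj
    (induce_spanningCoe_adj.2 ⟨hab, ha, hb⟩)

lemma componentFinset_subset_of_closed {X : Finset V} {A : Set V} {x : V} (hx : x ∈ A)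
    (hA : ∀ a ∈ A, ∀ b ∈ X, G.Adj a b → b ∈ A) : ↑(componentFinset G X x) ⊆ A := by
  intro y hy
  obtain ⟨p⟩ := SimpleGraph.ConnectedComponent.eq.1 (mem_componentFinset.1 hy).2.symm
  clear hy
  induction p with
  | nil => exact hx
  | cons hab _ ih =>
    obtain ⟨hadj, -, hb⟩ := induce_spanningCoe_adj.1 hab
    exact ih (hA _ hx _ hb hadj)

lemma eq_of_adj_of_inducedComponent_eq (hG : G.IsAcyclic) {X : Set V}
    {v u w : V} (hv : v ∉ X) (hu : G.Adj v u) (hw : G.Adj v w)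
    (huw : inducedComponent G X w = inducedComponent G X u) : w = u := by
  by_contra hne
  have hbridge := SimpleGraph.isAcyclic_iff_forall_adj_isBridge.1 hG hu
  have hvw : (G.deleteEdges {s(v, u)}).Adj v w := by
    simp [SimpleGraph.deleteEdges_adj, hw, hne, hu.ne]
  have hle : (G.induce X).spanningCoe ≤ G.deleteEdges {s(v, u)} := by
    intro a b hab
    obtain ⟨hadj, ha, hb⟩ := induce_spanningCoe_adj.1 hab
    rw [SimpleGraph.deleteEdges_adj]
    exact ⟨hadj, by grind [Sym2.eq_iff]⟩
  exact SimpleGraph.isBridge_iff.1 hbridge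
    (hvw.reachable.trans ((SimpleGraph.ConnectedComponent.eq.1 huw).mono hle))

lemma exists_forall_adj_eq_of_isAcyclic (hG : G.IsAcyclic) {X : Finset V} {v x : V} (hv : v ∉ X)
    (hx : x ∈ X) :
    ∃ u ∈ componentFinset G X x, ∀ w ∈ componentFinset G X x, G.Adj v w → w = u := by
  by_cases hex : ∃ u ∈ componentFinset G X x, G.Adj v u
  · obtain ⟨u, hu, hvu⟩ := hex
    refine ⟨u, hu, fun w hw hvw ↦ eq_of_adj_of_inducedComponent_eq hG (mod_cast hv) hvu hvw ?_⟩
    exact (mem_componentFinset.1 hw).2.trans (mem_componentFinset.1 hu).2.symm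
  · exact ⟨x, mem_componentFinset.2 ⟨hx, rfl⟩, fun w hw hvw ↦ absurd ⟨w, hw, hvw⟩ hex⟩

/- If the branch `C` of `x` at `v` has more than half of the vertices, then moving from `v` to its
only neighbour in `C` helps: the new branches lie inside `C` without `u`, or outside `C`. -/
lemma exists_forall_card_componentFinset_lt [DecidableEq V] (hG : G.IsAcyclic) {S : Finset V}
    {v x : V} (hx : x ∈ S.erase v) (hbig : #S < 2 * #(componentFinset G (S.erase v) x)) :
    ∃ u ∈ S, ∀ y ∈ S.erase u,
      #(componentFinset G (S.erase u) y) < #(componentFinset G (S.erase v) x) := by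
  set C := componentFinset G (S.erase v) x
  have hCS : C ⊆ S := fun z hz ↦ mem_of_mem_erase (mem_componentFinset.1 hz).1
  obtain ⟨u, huC, hu⟩ : ∃ u ∈ C, ∀ w ∈ C, G.Adj v w → w = u :=
    exists_forall_adj_eq_of_isAcyclic hG (notMem_erase v S) hx
  have hclosed : ∀ a ∈ C.erase u, ∀ b ∈ S.erase u, G.Adj a b → b ∈ C.erase u := by
    intro a ha b hb hab
    obtain ⟨hau, haC⟩ := mem_erase.1 ha
    obtain ⟨hbu, hbS⟩ := mem_erase.1 hb
    obtain ⟨haX, hax⟩ := mem_componentFinset.1 haC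
    have hbv : b ≠ v := by
      rintro rfl
      exact hau (hu a haC hab.symm)
    have hbX := mem_erase.2 ⟨hbv, hbS⟩
    exact mem_erase.2 ⟨hbu, mem_componentFinset.2
      ⟨hbX, (inducedComponent_eq_of_adj haX hbX hab).symm.trans hax⟩⟩
  have hclosed_compl : ∀ a ∈ S \ C, ∀ b ∈ S.erase u, G.Adj a b → b ∈ S \ C := by
    grind [SimpleGraph.Adj.symm]
  refine ⟨u, hCS huC, fun y hy ↦ ?_⟩
  by_cases hyC : y ∈ C
  · have hsub : componentFinset G (S.erase u) y ⊆ C.erase u := coe_subset.1 <|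
      componentFinset_subset_of_closed (mem_erase.2 ⟨(mem_erase.1 hy).1, hyC⟩) hclosed
    exact (card_le_card hsub).trans_lt (card_erase_lt_of_mem huC)
  · have hsub : componentFinset G (S.erase u) y ⊆ S \ C := coe_subset.1 <|
      componentFinset_subset_of_closed (mem_sdiff.2 ⟨mem_of_mem_erase hy, hyC⟩) hclosed_compl
    have := card_le_card hsub
    have := card_sdiff_add_card_eq_card hCS
    omega

lemma exists_centroid [DecidableEq V] (hG : G.IsAcyclic) {S : Finset V} (hS : S.Nonempty) :
    ∃ v ∈ S, ∀ x ∈ S.erase v, 2 * #(componentFinset G (S.erase v) x) ≤ #S := by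
  let maxBranch (v : V) : ℕ := (S.erase v).sup fun x ↦ #(componentFinset G (S.erase v) x)
  obtain ⟨v, hv, hmin⟩ := exists_min_image S maxBranch hS
  refine ⟨v, hv, fun x hx ↦ ?_⟩
  by_contra! hbig
  obtain ⟨u, hu, hlt⟩ := exists_forall_card_componentFinset_lt hG hx hbig
  have : maxBranch u < maxBranch v := calc
    maxBranch u < #(componentFinset G (S.erase v) x) := by
      rwa [Finset.sup_lt_iff (by rw [Nat.bot_eq_zero]; omega)]
    _ ≤ maxBranch v := le_sup (f := fun x ↦ #(componentFinset G (S.erase v) x)) hx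
  exact this.not_ge (hmin u hu)

end Component

section Forest

variable {V ι : Type*} {G : SimpleGraph V} {side : V → Bool}

lemma CrossEncodable.of_separator [DecidableEq V] [DecidableEq ι] {S : Finset V} {v : V} {f : V → ι}
    {K J l : ℕ} (hv : v ∈ S)
    (hf : ∀ a ∈ S.erase v, ∀ b ∈ S.erase v, G.Adj a b → f a = f b)
    (hfib : ∀ x ∈ S.erase v, #{y ∈ S.erase v | f y = f x} < K)
    (hK : 0 < K) (hS : #S ≤ K + J)
    (henc : ∀ T : Finset V, #T ≤ K → CrossEncodable G side T (l + 1))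
    (henc' : ∀ T : Finset V, #T ≤ J → CrossEncodable G side T l) :
    CrossEncodable G side S (l + 2) := by
  have hX : #(S.erase v) < K + J := (card_erase_lt_of_mem hv).trans_le hS
  have subset_insert {P : Set ι} (hP : ∀ i, i ∈ P) :
      (S : Set V) ⊆ insert v (↑(S.erase v) ∩ f ⁻¹' P) := by
    intro z hz
    by_cases hzv : z = v
    · exact .inl hzv
    · exact .inr ⟨mem_erase.2 ⟨hzv, hz⟩, hP _⟩
  have hgroup {k m : ℕ} (p : ι → Prop) [DecidablePred p]
      (hm : ∀ T : Finset V, #T ≤ m → CrossEncodable G side T k)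
      (hcard : #{y ∈ S.erase v | p (f y)} < m) :
      CrossEncodable G side (insert v (↑(S.erase v) ∩ f ⁻¹' {i | p i})) k := by
    refine (hm (insert v {y ∈ S.erase v | p (f y)}) ((card_insert_le _ _).trans hcard)).mono ?_
    rw [coe_insert, coe_filter]
    exact subset_rfl
  rcases exists_grouping hK hfib hX with ⟨s, hs, hs'⟩ | ⟨s, i, his, hs, hi, hrest⟩
  · have hP := hgroup (· ∈ s) henc hs
    have hQ := hgroup (· ∉ s) henc hs'
    exact (hP.union_preimage hf disjoint_compl_right hQ).mono
      (subset_insert fun i ↦ em (i ∈ s))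
  · have hP := hgroup (· ∈ s) henc' hs
    have hQ := hgroup (· = i) henc' hi
    have hR := hgroup (fun j ↦ j ∉ s ∧ j ≠ i) henc' hrest
    have hPQ := hP.union_preimage hf (Set.disjoint_singleton_right.2 his) hQ
    refine (hPQ.union_preimage hf (Set.disjoint_left.2 ?_) hR.succ).mono (subset_insert ?_)
    · rintro j (hj | hj) ⟨hjs, hji⟩
      exacts [hjs hj, hji hj]
    · grind

theorem crossEncodable_of_card_le_fib (hG : G.IsAcyclic) (l : ℕ) (S : Finset V)
    (hS : #S ≤ Nat.fib (l + 2)) : CrossEncodable G side S l := by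
  classical
  induction l using Nat.twoStepInduction generalizing S with
  | zero => exact .of_subsingleton (card_le_one_iff_subsingleton.1 hS)
  | one => exact .of_card_le_two hS
  | more l ih ih' =>
    obtain rfl | hne := S.eq_empty_or_nonempty
    · exact .of_subsingleton (by simp)
    obtain ⟨v, hv, hbranch⟩ := exists_centroid hG hne
    have hlt : Nat.fib (l + 2) < Nat.fib (l + 3) := Nat.fib_lt_fib_succ (by omega)
    have hadd : Nat.fib (l + 2 + 2) = Nat.fib (l + 2) + Nat.fib (l + 3) := Nat.fib_add_two
    refine .of_separator hv (f := inducedComponent G ↑(S.erase v)) (K := Nat.fib (l + 3))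
      (fun a ha b hb ↦ inducedComponent_eq_of_adj ha hb) (fun x hx ↦ ?_) (by omega) (by omega)
      ih' ih
    have := hbranch x hx
    change #(componentFinset G (S.erase v) x) < _
    omega

theorem pdim_le_of_card_le_fib [Fintype V] (hG : G.IsAcyclic) {l : ℕ}
    (hV : Fintype.card V ≤ Nat.fib (l + 2)) : pdim G ≤ l + 2 := by
  have C : G.Coloring Bool := hG.colorable_two.toColoring Fintype.card_bool.ge
  refine pdim_le_of_crossEncodable C ?_
  simpa only [coe_univ] using crossEncodable_of_card_le_fib hG l univ hV

end Forest

section GoldenRatio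

open Real

lemma goldenRatio_pow_le_fib (l : ℕ) : goldenRatio ^ l ≤ Nat.fib (l + 2) := by
  induction l using Nat.twoStepInduction with
  | zero => simp
  | one => simpa [Nat.fib_add_two] using goldenRatio_lt_two.le
  | more l ih ih' =>
    calc goldenRatio ^ (l + 2) = goldenRatio ^ l + goldenRatio ^ (l + 1) := by
          rw [pow_add, goldenRatio_sq]; ring
      _ ≤ Nat.fib (l + 2) + Nat.fib (l + 3) := add_le_add ih ih'
      _ = Nat.fib (l + 4) := by rw [Nat.fib_add_two (n := l + 2), Nat.cast_add]

lemma logb_goldenRatio_two_le : logb goldenRatio 2 ≤ 1.441 := by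
  have hφ : (1.618 : ℝ) ≤ goldenRatio := by
    have : (2.236 : ℝ) ≤ √5 := Real.le_sqrt_of_sq_le (by norm_num)
    rw [goldenRatio]
    linarith
  -- `85 / 59` is an upper approximation of `log_φ 2` that lies below `1.441`.
  have hpow : (2 : ℝ) ^ 59 ≤ goldenRatio ^ 85 := calc
    (2 : ℝ) ^ 59 ≤ 1.618 ^ 85 := by norm_num
    _ ≤ goldenRatio ^ 85 := by gcongr
  have hlog := logb_le_logb_of_le one_lt_goldenRatio (by positivity) hpow
  rw [logb_pow, logb_pow, logb_self_eq_one one_lt_goldenRatio] at hlog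
  norm_num at hlog ⊢
  linarith

theorem pdim_le_logb_goldenRatio_add_three {V : Type*} [Fintype V] {G : SimpleGraph V}
    (hG : G.IsAcyclic) (hn : 1 ≤ Fintype.card V) :
    pdim G ≤ logb goldenRatio (Fintype.card V) + 3 := by
  set n := Fintype.card V
  set l := ⌈logb goldenRatio n⌉₊
  have hn' : (1 : ℝ) ≤ n := by exact_mod_cast hn
  have hcard : n ≤ Nat.fib (l + 2) := by
    have : (n : ℝ) ≤ goldenRatio ^ l := by
      rw [← rpow_natCast, ← logb_le_iff_le_rpow one_lt_goldenRatio (by positivity)]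
      exact Nat.le_ceil _
    exact_mod_cast this.trans (goldenRatio_pow_le_fib l)
  have hl : (l : ℝ) < logb goldenRatio n + 1 :=
    Nat.ceil_lt_add_one (logb_nonneg one_lt_goldenRatio hn')
  have hpdim : (pdim G : ℝ) ≤ l + 2 := by exact_mod_cast pdim_le_of_card_le_fib hG hcard
  linarith

end GoldenRatio

/-- Every forest on `n ≥ 1` vertices has product dimension at most
`1.441 log₂ n + 3`. -/
theorem pdim_forest {V : Type*} [Fintype V] (G : SimpleGraph V)
    (hforest : G.IsAcyclic) (hn : 1 ≤ Fintype.card V) :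
    (pdim G : ℝ) ≤ 1.441 * Real.logb 2 (Fintype.card V) + 3 := by
  have hlog : 0 ≤ Real.logb 2 (Fintype.card V) :=
    Real.logb_nonneg one_lt_two (by exact_mod_cast hn)
  calc (pdim G : ℝ)
    _ ≤ Real.logb Real.goldenRatio (Fintype.card V) + 3 :=
      pdim_le_logb_goldenRatio_add_three hforest hn
    _ = Real.logb Real.goldenRatio 2 * Real.logb 2 (Fintype.card V) + 3 := by
      rw [Real.mul_logb] <;> norm_num
    _ ≤ 1.441 * Real.logb 2 (Fintype.card V) + 3 := by
      gcongr
      exact logb_goldenRatio_two_le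
end

section
/- Every graph G on n vertices with treewidth at most t has product dimension at most (t+2)(log₂ n + 1). -/
/-- `G` has a tree decomposition of width at most `t`. -/
def HasTreewidthLE {V : Type*} (G : SimpleGraph V) (t : ℕ) : Prop :=
  ∃ (I : Type) (_ : Fintype I) (T : SimpleGraph I) (X : I → Finset V),
    T.Connected ∧ T.IsAcyclic ∧
    (∀ v : V, ∃ i, v ∈ X i) ∧
    (∀ u v : V, G.Adj u v → ∃ i, u ∈ X i ∧ v ∈ X i) ∧
    (∀ v : V, (T.induce {i | v ∈ X i}).Connected) ∧
    (∀ i, (X i).card ≤ t + 1)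

/-!
Ordering the vertices by the depth of their topmost bag and turning all bags into cliques embeds
`G` into a graph `H` in which the earlier neighbours of every vertex form a clique, so that `H`
has a colouring `c` by `ℤ/(t+1)`. Every row of an encoding has to separate all adjacent pairs,
while every other pair has to be merged by some row. Suppose that for every `v` the earlier
vertices `u` with `c u ≠ c v` that no row has merged with `v` have distinct colours. Then `t + 1`
further rows suffice: for each `r : ℤ/(t+1)` at most one such `u` satisfies `c u + c v = r`, and
the row of `r` merges it with `v` unless they are adjacent in `G`.

One row achieves this distinctness on two vertices, and `q` more rows double the number of
vertices, where `q` is `t + 1` or `t + 2`, whichever is odd. Indeed, twice as many vertices can be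
split into three parts, the sides `0`, `1` and `-1`, that are treated independently apart from a
clique separating the last two from the rest. In the `i`-th new row, a vertex `v` outside this
clique gets the value `c v - side v * i` in `ℤ/q`. This separates adjacent vertices, which are on
the same side, and merges any two given vertices on different sides for some `i`, as the difference
of their sides is invertible modulo `q`. Altogether there are at most `1 + q * log₂ n + (t + 1)`
rows if `t ≥ 1`, while for `t = 0` there are no edges and two rows suffice.
-/

section RootedTree

variable {I : Type*} {T : SimpleGraph I} {r : I}

/-- `y` is the parent of `x` in the tree `T` rooted at `r`. -/
def IsParent (T : SimpleGraph I) (r y x : I) : Prop :=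
  T.Adj y x ∧ T.dist r y + 1 = T.dist r x

theorem IsParent.unique (hT : T.IsTree) {x y z : I} (hy : IsParent T r y x)
    (hz : IsParent T r z x) : y = z := by
  have geodesic : ∀ {y}, IsParent T r y x →
      ∃ p : T.Path x r, p.1.snd = y := fun {y} hy ↦ by
    obtain ⟨p, hp⟩ := hT.connected.exists_walk_length_eq_dist y r
    refine ⟨⟨.cons hy.1.symm p, SimpleGraph.Walk.isPath_of_length_eq_dist _ ?_⟩, by simp⟩
    rw [SimpleGraph.Walk.length_cons, hp, T.dist_comm, hy.2, T.dist_comm]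
  obtain ⟨p, rfl⟩ := geodesic hy
  obtain ⟨q, rfl⟩ := geodesic hz
  rw [(hT.isAcyclic.subsingleton_path x r).elim p q]

theorem isParent_or_isParent_of_adj (hT : T.IsTree) (r : I) {x y : I} (h : T.Adj x y) :
    IsParent T r y x ∨ IsParent T r x y :=
  (hT.dist_eq_dist_add_one_of_adj r h).imp (fun hd ↦ ⟨h.symm, hd.symm⟩) fun hd ↦ ⟨h, hd.symm⟩

theorem exists_isParent_mem (hT : T.IsTree) {C : Set I} (hC : (T.induce C).Connected) {i j : I}
    (hi : i ∈ C) (hj : j ∈ C) (hji : j ≠ i) (hd : T.dist r j ≤ T.dist r i) :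
    ∃ y ∈ C, IsParent T r y i := by
  by_contra! no_parent
  have descends : ∀ k : C, Relation.ReflTransGen (IsParent T r) i k := fun k ↦ by
    have hk := (SimpleGraph.reachable_iff_reflTransGen _ _).1 (hC.preconnected ⟨i, hi⟩ k)
    induction hk with
    | refl => exact .refl
    | @tail a b _ hab ih =>
      rcases isParent_or_isParent_of_adj hT r (SimpleGraph.induce_adj.1 hab) with hba | hab
      · rcases ih.cases_tail with hia | ⟨z, hiz, hza⟩
        · exact absurd (hia ▸ hba) (no_parent b b.2)
        · exact hza.unique hT hba ▸ hiz
      · exact ih.tail hab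
  have deeper : ∀ {k}, Relation.ReflTransGen (IsParent T r) i k →
      k = i ∨ T.dist r i < T.dist r k := fun hk ↦ by
    induction hk with
    | refl => exact .inl rfl
    | tail _ hab ih => rcases ih with rfl | ih <;> have := hab.2 <;> omega
  rcases deeper (descends ⟨j, hj⟩) with h | h
  exacts [hji h, hd.not_gt h]

theorem top_mem_of_mem_of_mem (hT : T.IsTree) {C D : Set I} (hC : (T.induce C).Connected)
    (hD : (T.induce D).Connected) {c d : I} (hc : c ∈ C) (hd : d ∈ D)
    (hc_min : ∀ k ∈ C, T.dist r c ≤ T.dist r k) (hd_min : ∀ k ∈ D, T.dist r d ≤ T.dist r k)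
    (hcd : T.dist r c ≤ T.dist r d) {i : I} (hiC : i ∈ C) (hiD : i ∈ D) : d ∈ C := by
  induction hn : T.dist r i generalizing i with
  | zero =>
    by_contra hdC
    obtain ⟨y, -, -, hy⟩ := exists_isParent_mem hT hD hiD hd (fun h ↦ hdC (h ▸ hiC)) (hd_min i hiD)
    omega
  | succ n ih =>
    by_contra hdC
    obtain ⟨y, hyD, hy⟩ :=
      exists_isParent_mem hT hD hiD hd (fun h ↦ hdC (h ▸ hiC)) (hd_min i hiD)
    have hci : c ≠ i := by
      rintro rfl
      have := hd_min y hyD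
      have := hy.2
      omega
    obtain ⟨z, hzC, hz⟩ := exists_isParent_mem hT hC hiC hc hci (hc_min i hiC)
    obtain rfl := hy.unique hT hz
    have := hy.2
    exact hdC (ih hzC hyD (by omega))

end RootedTree

section EliminationOrder

variable {V : Type*}

/-- The linear order of `V` is a perfect elimination order of `H`, read from the last vertex to
the first: the neighbours of each vertex that precede it form a clique. -/
def IsPerfectEliminationOrder [LinearOrder V] (H : SimpleGraph V) : Prop :=
  ∀ ⦃u w v : V⦄, u < w → w < v → H.Adj u v → H.Adj w v → H.Adj u w

/-- The graph obtained by turning every bag `X i` into a clique. -/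
def bagGraph {I : Type*} (X : I → Finset V) : SimpleGraph V where
  Adj u v := u ≠ v ∧ ∃ i, u ∈ X i ∧ v ∈ X i
  symm := ⟨fun _ _ ⟨hne, i, hu, hv⟩ ↦ ⟨hne.symm, i, hv, hu⟩⟩

theorem exists_linearOrder_monotone {α : Type*} [LinearOrder α] (d : V → α) :
    ∃ _ : LinearOrder V, Monotone d := by
  classical
  let := IsWellOrder.linearOrder (WellOrderingRel (α := V))
  refine ⟨LinearOrder.lift' (fun v ↦ toLex (d v, v)) fun u v h ↦
    congrArg (fun x ↦ (ofLex x).2) h, fun u v huv ↦ ?_⟩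
  exact Prod.Lex.monotone_fst_ofLex huv

theorem colorable_of_encard_lt_le [LinearOrder V] [WellFoundedLT V] {H : SimpleGraph V} {t : ℕ}
    (hH : ∀ v, {u | u < v ∧ H.Adj u v}.encard ≤ t) : H.Colorable (t + 1) := by
  have fresh : ∀ s : Set (Fin (t + 1)), ∃ k, s.encard ≤ t → k ∉ s := fun s ↦ by
    by_cases hs : s = Set.univ
    · refine ⟨0, fun h ↦ ?_⟩
      rw [hs, Set.encard_univ, ENat.card_eq_coe_fintype_card, Fintype.card_fin] at h
      exact absurd (Nat.cast_le.1 h) (by omega)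
    · obtain ⟨k, hk⟩ := (Set.ne_univ_iff_exists_notMem s).1 hs
      exact ⟨k, fun _ ↦ hk⟩
  choose g hg using fresh
  let χ : V → Fin (t + 1) := wellFounded_lt.fix fun v χ ↦
    g {k | ∃ u, ∃ h : u < v, H.Adj u v ∧ χ u h = k}
  have χ_eq : ∀ v, χ v = g (χ '' {u | u < v ∧ H.Adj u v}) := fun v ↦ by
    rw [show χ v = _ from wellFounded_lt.fix_eq _ v]
    congr 1
    ext k
    simp only [Set.mem_ofPred_eq, Set.mem_image, and_assoc, exists_prop]
    rfl
  have proper : ∀ {u v}, u < v → H.Adj u v → χ u ≠ χ v := fun {u v} huv hadj h ↦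
    hg (χ '' {u | u < v ∧ H.Adj u v}) ((Set.encard_image_le _ _).trans (hH v))
      ⟨u, ⟨huv, hadj⟩, h.trans (χ_eq v)⟩
  refine ⟨SimpleGraph.Coloring.mk χ fun {u v} hadj ↦ ?_⟩
  rcases hadj.ne.lt_or_gt with huv | hvu
  exacts [proper huv hadj, (proper hvu hadj.symm).symm]

theorem HasTreewidthLE.exists_isPerfectEliminationOrder {G : SimpleGraph V} {t : ℕ}
    (hG : HasTreewidthLE G t) :
    ∃ (_ : LinearOrder V) (H : SimpleGraph V),
      G ≤ H ∧ IsPerfectEliminationOrder H ∧ H.Colorable (t + 1) := by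
  obtain ⟨I, _, T, X, hconn, hacyc, hcover, hedge, hsub, hcard⟩ := hG
  have hT : T.IsTree := ⟨hconn, hacyc⟩
  have : Finite V := by
    refine Set.finite_univ_iff.1 ((Set.finite_iUnion fun i ↦ (X i).finite_toSet).subset ?_)
    exact fun v _ ↦ Set.mem_iUnion.2 (hcover v)
  obtain ⟨r⟩ := hconn.nonempty
  have exists_top : ∀ v, ∃ i, v ∈ X i ∧ ∀ k, v ∈ X k → T.dist r i ≤ T.dist r k := fun v ↦
    Set.exists_min_image {i | v ∈ X i} (T.dist r) (Set.toFinite _) (hcover v)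
  choose top mem_top top_le using exists_top
  obtain ⟨_, hmono⟩ := exists_linearOrder_monotone fun v ↦ T.dist r (top v)
  have mem_top_of_adj : ∀ {u v}, u < v → (bagGraph X).Adj u v → u ∈ X (top v) :=
    fun {u v} huv ⟨_, _, hui, hvi⟩ ↦ top_mem_of_mem_of_mem hT (hsub u) (hsub v) (mem_top u)
      (mem_top v) (top_le u) (top_le v) (hmono huv.le) hui hvi
  refine ⟨‹_›, bagGraph X, fun u v h ↦ ⟨h.ne, hedge u v h⟩, fun u w v huw hwv huv hwv' ↦
    ⟨huw.ne, top v, mem_top_of_adj (huw.trans hwv) huv, mem_top_of_adj hwv hwv'⟩,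
    colorable_of_encard_lt_le fun v ↦ ?_⟩
  have hsubset : {u | u < v ∧ (bagGraph X).Adj u v} ⊆ ((X (top v)).erase v : Finset V) :=
    fun u hu ↦ Finset.mem_erase.2 ⟨hu.1.ne, mem_top_of_adj hu.1 hu.2⟩
  refine (Set.encard_le_encard hsubset).trans ?_
  rw [Set.encard_coe_eq_coe_finsetCard, Nat.cast_le, Finset.card_erase_of_mem (mem_top v)]
  exact Nat.sub_le_of_le_add (hcard _)

end EliminationOrder

section Blocks

open Finset

variable {V : Type*} {H : SimpleGraph V} {W S D C : Finset V} {M : ℕ}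

/-- `C` is a union of connected components of the subgraph of `H` induced on `D ⊇ C`. -/
def IsAdjClosed (H : SimpleGraph V) (D C : Finset V) : Prop :=
  ∀ ⦃a b⦄, a ∈ D → b ∈ D → H.Adj a b → (a ∈ C ↔ b ∈ C)

theorem isAdjClosed_empty : IsAdjClosed H D ∅ := fun _ _ _ _ _ ↦ by simp

variable [LinearOrder V]

/-- `w` can be reached from `x` along a path of `H` on which the vertices increase. For a perfect
elimination order this says that `x` is an ancestor of `w` in the elimination tree. -/
def AscendingReach (H : SimpleGraph V) (x w : V) : Prop :=
  Relation.ReflTransGen (fun a b ↦ a < b ∧ H.Adj a b) x w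

theorem AscendingReach.le {x w : V} (h : AscendingReach H x w) : x ≤ w := by
  induction h with
  | refl => exact le_rfl
  | tail _ hab ih => exact ih.trans hab.1.le

theorem AscendingReach.of_adj (hH : IsPerfectEliminationOrder H) {x y w : V}
    (hxw : AscendingReach H x w) (hyw : y < w) (hadj : H.Adj y w) :
    AscendingReach H x y ∨ y < x ∧ H.Adj y x := by
  induction hxw with
  | refl => exact .inr ⟨hyw, hadj⟩
  | @tail a w hxa haw ih =>
    rcases lt_trichotomy y a with hya | rfl | hay
    · exact ih hya (hH hya haw.1 hadj haw.2)
    · exact .inl hxa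
    · exact .inl (hxa.tail ⟨hay, hH hay hyw haw.2 hadj⟩)

open Classical in
/-- The vertices of `W` that have `x` as an ancestor (including `x` itself). -/
noncomputable def descendants (H : SimpleGraph V) (W : Finset V) (x : V) : Finset V :=
  {w ∈ W | AscendingReach H x w}

theorem mem_descendants {x w : V} : w ∈ descendants H W x ↔ w ∈ W ∧ AscendingReach H x w := by
  classical exact mem_filter

theorem mem_descendants_self {x : V} (hx : x ∈ W) : x ∈ descendants H W x :=
  mem_descendants.2 ⟨hx, .refl⟩

theorem descendants_subset (x : V) : descendants H W x ⊆ W :=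
  fun _ hw ↦ (mem_descendants.1 hw).1

/-- `W` is a set of vertices still to be encoded whose earlier neighbours outside `W` lie in the
clique `S`, all of whose vertices precede `W`. -/
structure IsBlock (H : SimpleGraph V) (W S : Finset V) : Prop where
  mem_of_adj : ∀ ⦃u v⦄, v ∈ W → u < v → H.Adj u v → u ∈ W ∪ S
  lt : ∀ ⦃s w⦄, s ∈ S → w ∈ W → s < w
  isClique : H.IsClique (S : Set V)

theorem IsBlock.disjoint (hW : IsBlock H W S) : Disjoint W S :=
  disjoint_left.2 fun _ hv hs ↦ (hW.lt hs hv).false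

theorem IsBlock.mem_of_adj_of_le (hW : IsBlock H W S) {x u v : V} (hx : x ∈ W) (hv : v ∈ W)
    (hxu : x ≤ u) (huv : u < v) (hadj : H.Adj u v) : u ∈ W :=
  (mem_union.1 (hW.mem_of_adj hv huv hadj)).resolve_right fun hu ↦ (hW.lt hu hx).not_ge hxu

theorem isAdjClosed_of_lt
    (h : ∀ ⦃a b⦄, a ∈ D → b ∈ D → a < b → H.Adj a b → (a ∈ C ↔ b ∈ C)) : IsAdjClosed H D C :=
  fun _ _ ha hb hab ↦ hab.ne.lt_or_gt.elim (h ha hb · hab) fun hba ↦ (h hb ha hba hab.symm).symm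

theorem isAdjClosed_descendants (hH : IsPerfectEliminationOrder H) {y : V}
    (hy : ∀ u ∈ D, u < y → ¬H.Adj u y) : IsAdjClosed H D (descendants H D y) := by
  refine isAdjClosed_of_lt fun a b ha hb hlt hadj ↦ ?_
  simp only [mem_descendants, ha, hb, true_and]
  refine ⟨fun hya ↦ hya.tail ⟨hlt, hadj⟩, fun hyb ↦ ?_⟩
  exact (hyb.of_adj hH hlt hadj).resolve_right fun hay ↦ hy a ha hay.1 hay.2

theorem IsBlock.disjoint_descendants (hD : IsBlock H D S) (hC : IsAdjClosed H D C) {y : V}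
    (hyD : y ∈ D) (hyC : y ∉ C) : Disjoint C (descendants H D y) := by
  refine disjoint_right.2 fun w hw ↦ ?_
  obtain ⟨hwD, hyw⟩ := mem_descendants.1 hw
  induction hyw with
  | refl => exact hyC
  | @tail a w hya haw ih =>
    have haD := hD.mem_of_adj_of_le hyD hwD (AscendingReach.le hya) haw.1 haw.2
    exact fun hwC ↦ ih (mem_descendants.2 ⟨haD, hya⟩) haD ((hC haD hwD haw.2).2 hwC)

theorem IsBlock.exists_isAdjClosed_pair (hH : IsPerfectEliminationOrder H) (hD : IsBlock H D S)
    (hM : ∀ x ∈ D, #(descendants H D x) ≤ M) :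
    ∃ A ⊆ D, ∃ B ⊆ D, Disjoint A B ∧ IsAdjClosed H D A ∧ IsAdjClosed H D B ∧
      #A ≤ M ∧ #B ≤ M ∧ (A = D ∨ M < #A + #B) := by
  classical
  obtain ⟨A, hA, A_max⟩ := exists_max_image {A ∈ D.powerset | IsAdjClosed H D A ∧ #A ≤ M} card
    ⟨∅, mem_filter.2 ⟨empty_mem_powerset D, isAdjClosed_empty, by simp⟩⟩
  simp only [mem_filter, mem_powerset, and_imp] at hA A_max
  obtain ⟨hAD, hAclosed, hAM⟩ := hA
  rcases (D \ A).eq_empty_or_nonempty with hDA | hDA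
  · refine ⟨A, hAD, ∅, empty_subset _, disjoint_empty_right _, hAclosed, isAdjClosed_empty,
      hAM, by simp, .inl ?_⟩
    exact (hAD.antisymm (sdiff_eq_empty_iff_subset.1 hDA))
  · obtain ⟨hyD, hyA⟩ := mem_sdiff.1 ((D \ A).min'_mem hDA)
    set y := (D \ A).min' hDA
    have no_earlier : ∀ u ∈ D, u < y → ¬H.Adj u y := fun u hu huy hadj ↦ by
      have huA : u ∉ A := fun h ↦ hyA ((hAclosed hu hyD hadj).1 h)
      exact ((D \ A).min'_le u (mem_sdiff.2 ⟨hu, huA⟩)).not_gt huy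
    have hBclosed := isAdjClosed_descendants hH no_earlier
    have hdisj := hD.disjoint_descendants hAclosed hyD hyA
    refine ⟨A, hAD, _, descendants_subset y, hdisj, hAclosed, hBclosed, hAM, hM y hyD, .inr ?_⟩
    rw [← card_union_of_disjoint hdisj]
    by_contra! hsmall
    have hle := A_max (A ∪ descendants H D y) (union_subset hAD (descendants_subset y))
      (fun a b ha hb hab ↦ by
        simp only [mem_union, hAclosed ha hb hab, hBclosed ha hb hab]) hsmall
    rw [card_union_of_disjoint hdisj] at hle
    have := card_pos.2 ⟨y, mem_descendants_self (H := H) hyD⟩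
    omega

/-- `D` is a block inside the block `W`, with a separator `S'` of its own, that contains every
later neighbour in `W` of each of its vertices. -/
structure IsLowerPart (H : SimpleGraph V) (W S D S' : Finset V) : Prop where
  isBlock : IsBlock H D S'
  subset : D ⊆ W
  separator_subset : S' ⊆ (W \ D) ∪ S
  mem_of_adj : ∀ ⦃u v⦄, u ∈ D → v ∈ W → u < v → H.Adj u v → v ∈ D

theorem IsBlock.isLowerPart_self (hW : IsBlock H W S) : IsLowerPart H W S W S where
  isBlock := hW
  subset := Subset.rfl
  separator_subset := subset_union_right
  mem_of_adj _ _ _ hv _ _ := hv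

open Classical in
theorem IsBlock.isLowerPart_descendants_erase (hH : IsPerfectEliminationOrder H)
    (hW : IsBlock H W S) {x : V} (hx : x ∈ W) :
    IsLowerPart H W S ((descendants H W x).erase x)
      (insert x {s ∈ W ∪ S | s < x ∧ H.Adj s x}) := by
  have mem_D : ∀ {w}, w ∈ (descendants H W x).erase x ↔ w ≠ x ∧ w ∈ W ∧ AscendingReach H x w :=
    by simp [mem_descendants]
  have lt_of_mem_D : ∀ {w}, w ∈ (descendants H W x).erase x → x < w := fun hw ↦
    (mem_D.1 hw).2.2.le.lt_of_ne' (mem_D.1 hw).1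
  have mem_S' : ∀ {s}, s ∈ insert x {s ∈ W ∪ S | s < x ∧ H.Adj s x} ↔
      s = x ∨ s ∈ W ∪ S ∧ s < x ∧ H.Adj s x := by simp only [mem_insert, mem_filter, implies_true]
  refine ⟨⟨fun u v hv huv hadj ↦ ?_, fun s w hs hw ↦ ?_, fun s hs s' hs' hne ↦ ?_⟩,
    (erase_subset _ _).trans (descendants_subset x), fun s hs ↦ ?_, fun u v hu hv huv hadj ↦ ?_⟩
  · obtain ⟨-, hvW, hxv⟩ := mem_D.1 hv
    rw [mem_union, mem_D, mem_S']
    rcases hxv.of_adj hH huv hadj with hxu | hux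
    · have := hW.mem_of_adj_of_le hx hvW hxu.le huv hadj
      tauto
    · exact .inr (.inr ⟨hW.mem_of_adj hvW huv hadj, hux⟩)
  · rcases mem_S'.1 hs with rfl | ⟨-, hsx, -⟩
    exacts [lt_of_mem_D hw, hsx.trans (lt_of_mem_D hw)]
  · rcases mem_S'.1 hs with rfl | ⟨-, hsx, hs⟩ <;> rcases mem_S'.1 hs' with rfl | ⟨-, hsx', hs'⟩
    · exact absurd rfl hne
    · exact hs'.symm
    · exact hs
    · rcases hne.lt_or_gt with hlt | hgt
      exacts [hH hlt hsx' hs hs', (hH hgt hsx hs' hs).symm]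
  · have hsD : s ∉ (descendants H W x).erase x := fun h ↦ by
      rcases mem_S'.1 hs with rfl | ⟨-, hsx, -⟩
      exacts [(lt_of_mem_D h).false, (lt_of_mem_D h).asymm hsx]
    rcases mem_S'.1 hs with rfl | ⟨hs, -, -⟩
    · simp [hx]
    · grind
  · exact mem_D.2 ⟨((lt_of_mem_D hu).trans huv).ne', hv, (mem_D.1 hu).2.2.tail ⟨huv, hadj⟩⟩

theorem IsBlock.exists_isLowerPart (hH : IsPerfectEliminationOrder H) (hW : IsBlock H W S)
    (hcard : #W ≤ 2 * M) :
    ∃ D S', IsLowerPart H W S D S' ∧ #W ≤ #D + M ∧ ∀ x ∈ D, #(descendants H D x) ≤ M := by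
  by_cases hlarge : ({x ∈ W | M < #(descendants H W x)} : Finset V).Nonempty
  · obtain ⟨hxW, hxM⟩ := mem_filter.1 (max'_mem _ hlarge)
    set x := max' _ hlarge
    refine ⟨_, _, hW.isLowerPart_descendants_erase hH hxW, ?_, fun y hy ↦ ?_⟩
    · rw [card_erase_of_mem (mem_descendants_self hxW)]
      omega
    · obtain ⟨hyx, hy⟩ := mem_erase.1 hy
      obtain ⟨hyW, hxy⟩ := mem_descendants.1 hy
      have hyM : #(descendants H W y) ≤ M := by
        by_contra! hyM
        exact hyx ((le_max' _ y (mem_filter.2 ⟨hyW, hyM⟩)).antisymm hxy.le)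
      refine (card_le_card fun w hw ↦ ?_).trans hyM
      obtain ⟨hwD, hyw⟩ := mem_descendants.1 hw
      exact mem_descendants.2 ⟨descendants_subset x (mem_of_mem_erase hwD), hyw⟩
  · simp only [filter_nonempty_iff, not_exists, not_and, not_lt] at hlarge
    exact ⟨W, S, hW.isLowerPart_self, by omega, hlarge⟩

/-- `side` splits the block `W` with separator `S` into three blocks of at most `M` vertices each.
The part on side `0` keeps the separator `S`, while the parts on the sides `1` and `-1` share the
separator `S'`, which avoids both of them. Outside `W` the value of `side` is `0`. -/
structure IsSplitting (H : SimpleGraph V) (W S S' : Finset V) (M : ℕ) (side : V → SignType) :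
    Prop where
  eq_zero : ∀ v ∉ W, side v = 0
  card_le : ∀ g, #{v ∈ W | side v = g} ≤ M
  isBlock : ∀ g, IsBlock H {v ∈ W | side v = g} (if g = 0 then S else S')
  separator : ∀ s ∈ S', s ∈ W ∪ S ∧ side s = 0

theorem IsLowerPart.isSplitting {S' : Finset V} {side : V → SignType} (hD : IsLowerPart H W S D S')
    (hW : IsBlock H W S) (side_eq_zero : ∀ v ∉ D, side v = 0)
    (side_congr : ∀ u ∈ D, ∀ v ∈ D, H.Adj u v → side u = side v)
    (hcard : ∀ g, #{v ∈ W | side v = g} ≤ M) : IsSplitting H W S S' M side := by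
  have mem_D : ∀ {v}, side v ≠ 0 → v ∈ D := fun hv ↦ not_imp_comm.1 (side_eq_zero _) hv
  have separator : ∀ s ∈ S', s ∈ W ∪ S ∧ s ∉ D := fun s hs ↦
    ⟨union_subset_union_left sdiff_subset (hD.separator_subset hs),
      disjoint_right.1 hD.isBlock.disjoint hs⟩
  refine ⟨fun v hv ↦ side_eq_zero v fun hvD ↦ hv (hD.subset hvD), hcard, fun g ↦ ?_,
    fun s hs ↦ ⟨(separator s hs).1, side_eq_zero s (separator s hs).2⟩⟩
  split_ifs with hg
  · subst hg
    refine ⟨fun u v hv huv hadj ↦ ?_, fun s w hs hw ↦ hW.lt hs (mem_filter.1 hw).1, hW.isClique⟩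
    obtain ⟨hvW, hv⟩ := mem_filter.1 hv
    refine mem_union.2 ((mem_union.1 (hW.mem_of_adj hvW huv hadj)).imp_left fun huW ↦
      mem_filter.2 ⟨huW, ?_⟩)
    by_contra hu
    exact hu ((side_congr u (mem_D hu) v (hD.mem_of_adj (mem_D hu) hvW huv hadj) hadj).trans hv)
  · have mem_D_of_mem : ∀ {v}, v ∈ ({v ∈ W | side v = g} : Finset V) → v ∈ D := fun hv ↦
      mem_D ((mem_filter.1 hv).2.trans_ne hg)
    refine ⟨fun u v hv huv hadj ↦ ?_, fun s w hs hw ↦ hD.isBlock.lt hs (mem_D_of_mem hw),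
      hD.isBlock.isClique⟩
    have hvD := mem_D_of_mem hv
    refine mem_union.2 ((mem_union.1 (hD.isBlock.mem_of_adj hvD huv hadj)).imp_left fun huD ↦ ?_)
    exact mem_filter.2 ⟨hD.subset huD, (side_congr u huD v hvD hadj).trans (mem_filter.1 hv).2⟩

theorem IsBlock.exists_isSplitting (hH : IsPerfectEliminationOrder H) (hW : IsBlock H W S)
    (hcard : #W ≤ 2 * M) : ∃ S' side, IsSplitting H W S S' M side := by
  obtain ⟨D, S', hD, hWD, hM⟩ := hW.exists_isLowerPart hH hcard
  obtain ⟨A, hAD, B, hBD, hAB, hA, hB, hAM, hBM, hlarge⟩ :=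
    hD.isBlock.exists_isAdjClosed_pair hH hM
  let side : V → SignType := fun v ↦ if v ∈ A then 1 else if v ∈ B then -1 else 0
  have one_iff : ∀ v, side v = 1 ↔ v ∈ A := fun v ↦ by
    simp only [side]; split_ifs <;> simp_all
  have neg_one_iff : ∀ v, side v = -1 ↔ v ∈ B := fun v ↦ by
    have hv : v ∈ A → v ∉ B := fun hv ↦ disjoint_left.1 hAB hv
    simp only [side]; split_ifs <;> simp_all
  have zero_iff : ∀ v, side v = 0 ↔ v ∉ A ∪ B := fun v ↦ by
    simp only [side, mem_union]; split_ifs <;> simp_all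
  refine ⟨S', side, hD.isSplitting hW (fun v hv ↦ (zero_iff v).2 fun h ↦ hv
    (union_subset hAD hBD h)) (fun u hu v hv hadj ↦ by
      simp only [side, hA hu hv hadj, hB hu hv hadj]) fun g ↦ ?_⟩
  rcases g.trichotomy with rfl | rfl | rfl
  · simp only [neg_one_iff]
    exact (card_le_card (filter_mem_eq_inter.trans_subset inter_subset_right)).trans hBM
  · simp only [zero_iff]
    rw [← sdiff_eq_filter, card_sdiff_of_subset ((union_subset hAD hBD).trans hD.subset),
      card_union_of_disjoint hAB]
    rcases hlarge with rfl | hlarge <;> omega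
  · simp only [one_iff]
    exact (card_le_card (filter_mem_eq_inter.trans_subset inter_subset_right)).trans hAM

end Blocks

section PartialEncodings

open Finset

variable {V α ι κ : Type*} {H : SimpleGraph V} {c : H.Coloring α} {W S : Finset V}

theorem injOn_coloring_of_isClique (c : H.Coloring α) {s : Set V} (hs : H.IsClique s) :
    Set.InjOn c s :=
  fun _ hu _ hv huv ↦ by_contra fun hne ↦ c.valid (hs hu hv hne) huv

theorem exists_extension_eq_iff [DecidableEq V] {f₀ : V → ℕ} {k : V → κ} (hWS : Disjoint W S)
    (hf₀ : Set.InjOn f₀ S) (hk : Set.InjOn k S) :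
    ∃ f : V → ℕ, (∀ v ∉ W, f v = f₀ v) ∧ ∀ u ∈ W ∪ S, ∀ v ∈ W ∪ S, f u = f v ↔ k u = k v := by
  induction W using Finset.induction_on with
  | empty =>
    refine ⟨f₀, fun _ _ ↦ rfl, fun u hu v hv ↦ ?_⟩
    rw [empty_union] at hu hv
    exact (hf₀.eq_iff hu hv).trans (hk.eq_iff hu hv).symm
  | insert w W hwW ih =>
    rw [disjoint_insert_left] at hWS
    obtain ⟨f, hf_off, hf⟩ := ih hWS.2
    have hw : w ∉ W ∪ S := by simp [hwW, hWS.1]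
    obtain ⟨n, hn⟩ : ∃ n, ∀ u ∈ W ∪ S, f u = n ↔ k u = k w := by
      by_cases h : ∃ u ∈ W ∪ S, k u = k w
      · obtain ⟨u₀, hu₀, hkw⟩ := h
        exact ⟨f u₀, fun u hu ↦ (hf u hu u₀ hu₀).trans (by rw [hkw])⟩
      · obtain ⟨n, hn⟩ := Infinite.exists_notMem_finset ((W ∪ S).image f)
        exact ⟨n, fun u hu ↦ iff_of_false (fun hfu ↦ hn (hfu ▸ mem_image_of_mem f hu))
          fun hku ↦ h ⟨u, hu, hku⟩⟩
    refine ⟨Function.update f w n, fun v hv ↦ ?_, fun u hu v hv ↦ ?_⟩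
    · rw [mem_insert, not_or] at hv
      rw [Function.update_of_ne hv.1, hf_off v hv.2]
    · rw [insert_union, mem_insert] at hu hv
      rcases hu with rfl | hu <;> rcases hv with rfl | hv
      · simp
      · rw [Function.update_self, Function.update_of_ne (ne_of_mem_of_not_mem hv hw), eq_comm,
          hn v hv, eq_comm]
      · rw [Function.update_self, Function.update_of_ne (ne_of_mem_of_not_mem hu hw), hn u hu]
      · rw [Function.update_of_ne (ne_of_mem_of_not_mem hu hw),
          Function.update_of_ne (ne_of_mem_of_not_mem hv hw), hf u hu v hv]

variable [LinearOrder V]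

theorem injOn_of_ne_of_lt {f : V → κ} {s : Set V} (hf : ∀ u ∈ s, ∀ v ∈ s, u < v → f u ≠ f v) :
    Set.InjOn f s := by
  intro u hu v hv h
  by_contra hne
  rcases lt_or_gt_of_ne hne with huv | hvu
  exacts [hf u hu v hv huv h, hf v hv u hu hvu h.symm]

/-- The vertices of `A` before `v` that differ from `v` both in colour and in every row of `f`.
They include the earlier neighbours of `v`; the others still have to be told apart from these. -/
def unmergedBefore (c : V → α) (f : ι → V → ℕ) (A : Finset V) (v : V) : Set V :=
  {u | u ∈ A ∧ u < v ∧ c u ≠ c v ∧ ∀ j, f j u ≠ f j v}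

/-- The rows `f j` separate adjacent vertices and vertices of the same colour, and they merge
enough of the remaining pairs that the unmerged vertices before each vertex of `W` have distinct
colours, as the earlier neighbours have. -/
structure IsPartialEncoding (c : H.Coloring α) (W S : Finset V) (f : ι → V → ℕ) : Prop where
  ne_of_adj : ∀ j ⦃u v⦄, v ∈ W → u < v → H.Adj u v → f j u ≠ f j v
  injOn : ∀ ⦃v⦄, v ∈ W → Set.InjOn c (unmergedBefore c f (W ∪ S) v)
  exists_ne : ∀ ⦃u v⦄, u ∈ W → v ∈ W → u ≠ v → c u = c v → ∃ j, f j u ≠ f j v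

theorem isPartialEncoding_empty (f : ι → V → ℕ) : IsPartialEncoding c ∅ S f := by
  constructor <;> simp

theorem IsPartialEncoding.congr {f g : ι → V → ℕ} (hf : IsPartialEncoding c W S f)
    (hW : IsBlock H W S) (hfg : ∀ j, ∀ v ∈ W ∪ S, g j v = f j v) : IsPartialEncoding c W S g where
  ne_of_adj j u v hv huv hadj := by
    rw [hfg j v (mem_union_left S hv), hfg j u (hW.mem_of_adj hv huv hadj)]
    exact hf.ne_of_adj j hv huv hadj
  injOn v hv := by
    refine (hf.injOn hv).mono ?_
    rintro u ⟨huA, huv, hcuv, hguv⟩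
    refine ⟨huA, huv, hcuv, fun j ↦ ?_⟩
    rw [← hfg j v (mem_union_left S hv), ← hfg j u huA]
    exact hguv j
  exists_ne u v hu hv huv hcuv := (hf.exists_ne hu hv huv hcuv).imp fun j hj ↦ by
    rwa [hfg j v (mem_union_left S hv), hfg j u (mem_union_left S hu)]

theorem IsPartialEncoding.injOn_of_isClique {f : ι → V → ℕ} (hf : IsPartialEncoding c W S f)
    (hW : IsBlock H W S) {j : ι} (hfS : Set.InjOn (f j) S) {Q : Set V} (hQ : H.IsClique Q)
    (hQWS : ∀ v ∈ Q, v ∈ W ∪ S) : Set.InjOn (f j) Q := by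
  refine injOn_of_ne_of_lt fun u hu v hv huv ↦ ?_
  rcases mem_union.1 (hQWS v hv) with hvW | hvS
  · exact hf.ne_of_adj j hvW huv (hQ hu hv huv.ne)
  · have huS := (mem_union.1 (hQWS u hu)).resolve_left fun huW ↦ (hW.lt hvS huW).asymm huv
    exact fun h ↦ huv.ne (hfS huS hvS h)

/-- Every block of at most `M` vertices has a partial encoding with rows indexed by `ι` that
extends any rows prescribed outside the block, provided that these are injective on `S`. -/
def HasPartialEncodings (c : H.Coloring α) (M : ℕ) (ι : Type*) : Prop :=
  ∀ ⦃W S : Finset V⦄ ⦃f₀ : ι → V → ℕ⦄, IsBlock H W S → #W ≤ M → (∀ j, Set.InjOn (f₀ j) S) →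
    ∃ f : ι → V → ℕ, (∀ j, ∀ v ∉ W, f j v = f₀ j v) ∧ IsPartialEncoding c W S f

theorem exists_merge (hH : IsPerfectEliminationOrder H) (c : H.Coloring α) (hW : IsBlock H W S)
    (hcard : #W ≤ 2) {w : V} (hw : w ∈ W) :
    ∃ y, (y = w ∨ y < w ∧ c y ≠ c w ∧ ¬H.Adj y w) ∧
      Set.InjOn c {u | u ∈ W ∪ S ∧ u < w ∧ c u ≠ c w ∧ u ≠ y} := by
  have hcS := injOn_coloring_of_isClique c hW.isClique
  have mem_of_lt : ∀ {a b}, a ∈ W ∪ S → b ∈ W ∪ S → a < b → b < w → c a = c b → a ∈ S ∧ b ∈ W :=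
    fun {a b} ha hb hab hbw hcab ↦ by
      have hbW := (mem_union.1 hb).resolve_right fun hbS ↦ by
        have haS := (mem_union.1 ha).resolve_left fun haW ↦ (hW.lt hbS haW).asymm hab
        exact hab.ne (hcS haS hbS hcab)
      refine ⟨(mem_union.1 ha).resolve_left fun haW ↦ hcard.not_gt ?_, hbW⟩
      exact two_lt_card.2 ⟨a, haW, b, hbW, w, hw, hab.ne, (hab.trans hbw).ne, hbw.ne⟩
  by_cases hinj : ∃ a ∈ W ∪ S, ∃ b ∈ W ∪ S, a < b ∧ b < w ∧ c a = c b ∧ c b ≠ c w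
  · obtain ⟨a, ha, b, hb, hab, hbw, hcab, hcbw⟩ := hinj
    obtain ⟨haS, hbW⟩ := mem_of_lt ha hb hab hbw hcab
    -- Two neighbours of `w` that precede it are adjacent, so `a` and `b` are not both neighbours.
    obtain ⟨y, hy, hyw⟩ : ∃ y, (y = a ∨ y = b) ∧ ¬H.Adj y w := by
      by_contra! hadj
      exact c.valid (hH hab hbw (hadj a (.inl rfl)) (hadj b (.inr rfl))) hcab
    refine ⟨y, .inr ⟨?_, ?_, hyw⟩, ?_⟩
    · rcases hy with rfl | rfl
      exacts [hab.trans hbw, hbw]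
    · rcases hy with rfl | rfl
      exacts [hcab.trans_ne hcbw, hcbw]
    refine injOn_of_ne_of_lt fun u hu v hv huv hcuv ↦ ?_
    obtain ⟨huS, hvW⟩ := mem_of_lt hu.1 hv.1 huv hv.2.1 hcuv
    have hvb : v = b := by
      by_contra hvb
      exact hcard.not_gt (two_lt_card.2 ⟨v, hvW, b, hbW, w, hw, hvb, hv.2.1.ne, hbw.ne⟩)
    have hua : u = a := hcS huS haS (hcuv.trans (hvb ▸ hcab.symm))
    rcases hy with rfl | rfl
    exacts [hu.2.2.2 hua, hv.2.2.2 hvb]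
  · exact ⟨w, .inl rfl, injOn_of_ne_of_lt fun u hu v hv huv hcuv ↦
      hinj ⟨u, hu.1, v, hv.1, huv, hv.2.1, hcuv, hv.2.2.1⟩⟩

theorem IsBlock.exists_extension_eq_iff_of_le (hW : IsBlock H W S) {w : V} (hwW : w ∈ W)
    (hw : ∀ v ∈ W, v ≤ w) (y : V) {f₀ : V → ℕ} (hf₀ : Set.InjOn f₀ S) :
    ∃ f : V → ℕ, (∀ v ∉ W, f v = f₀ v) ∧
      ∀ u ∈ W ∪ S, ∀ v ∈ W, u < v → (f u = f v ↔ v = w ∧ u = y) := by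
  let k : V → V := Function.update id w y
  have k_self : k w = y := Function.update_self ..
  have k_of_ne : ∀ {v}, v ≠ w → k v = v := fun hv ↦ Function.update_of_ne hv ..
  have hkS : Set.InjOn k S := by
    have w_notMem : w ∉ S := disjoint_left.1 hW.disjoint hwW
    refine Function.injective_id.injOn.congr fun s hs ↦ ?_
    exact (k_of_ne (ne_of_mem_of_not_mem hs w_notMem)).symm
  obtain ⟨f, hf_off, hf⟩ := exists_extension_eq_iff hW.disjoint hf₀ hkS
  refine ⟨f, hf_off, fun u hu v hv huv ↦ ?_⟩
  rw [hf u hu v (mem_union_left S hv), k_of_ne (huv.trans_le (hw v hv)).ne]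
  by_cases hvw : v = w
  · rw [hvw, k_self, eq_self, true_and]
  · rw [k_of_ne hvw, iff_false_right fun h ↦ hvw h.1]
    exact huv.ne

theorem hasPartialEncodings_two (hH : IsPerfectEliminationOrder H) (c : H.Coloring α) :
    HasPartialEncodings c 2 PUnit := by
  intro W S f₀ hW hcard hf₀
  rcases W.eq_empty_or_nonempty with rfl | hne
  · exact ⟨f₀, fun _ _ _ ↦ rfl, isPartialEncoding_empty f₀⟩
  obtain ⟨w, hwW, hw⟩ : ∃ w ∈ W, ∀ v ∈ W, v ≤ w := ⟨_, W.max'_mem hne, W.le_max'⟩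
  obtain ⟨y, hy, hinj⟩ := exists_merge hH c hW hcard hwW
  obtain ⟨f, hf_off, hf⟩ := hW.exists_extension_eq_iff_of_le hwW hw y (hf₀ ⟨⟩)
  refine ⟨fun _ ↦ f, fun _ ↦ hf_off, fun _ u v hv huv hadj ↦ ?_, fun v hv ↦ ?_,
    fun u v hu hv hne hcuv ↦ ⟨⟨⟩, ?_⟩⟩
  · rw [Ne, hf u (hW.mem_of_adj hv huv hadj) v hv huv]
    rintro ⟨rfl, rfl⟩
    exact hy.elim huv.ne fun hy ↦ hy.2.2 hadj
  · by_cases hvw : v = w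
    · subst hvw
      refine hinj.mono ?_
      rintro u ⟨hu, huv, hcuv, hfuv⟩
      exact ⟨hu, huv, hcuv, fun huy ↦ hfuv ⟨⟩ ((hf u hu v hv huv).2 ⟨rfl, huy⟩)⟩
    · refine (injOn_coloring_of_isClique c hW.isClique).mono ?_
      rintro u ⟨hu, huv, -⟩
      refine (mem_union.1 hu).resolve_left fun huW ↦ hcard.not_gt ?_
      exact two_lt_card.2 ⟨u, huW, v, hv, w, hwW, huv.ne, (huv.trans_le (hw v hv)).ne, hvw⟩
  · wlog huv : u < v generalizing u v
    · exact (this v u hv hu hne.symm hcuv.symm (hne.lt_or_gt.resolve_left huv)).symm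
    rw [Ne, hf u (mem_union_left S hu) v hv huv]
    rintro ⟨rfl, rfl⟩
    exact hy.elim hne fun hy ↦ hy.2.1 hcuv

end PartialEncodings

section Doubling

open Finset

universe u

variable {V α ι K : Type*} [LinearOrder V] {H : SimpleGraph V} {c : H.Coloring α}
  {W S S' : Finset V} {M : ℕ} {side : V → SignType}

theorem IsSplitting.mem_filter_union (hs : IsSplitting H W S S' M side) {u v : V} (hu : u ∈ W ∪ S)
    (huv : side u = side v) :
    u ∈ ({w ∈ W | side w = side v} : Finset V) ∪ (if side v = 0 then S else S') := by
  by_cases huW : u ∈ W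
  · exact mem_union_left _ (mem_filter.2 ⟨huW, huv⟩)
  · have huS := (mem_union.1 hu).resolve_left huW
    rw [if_pos (huv ▸ hs.eq_zero u huW)]
    exact mem_union_right _ huS

theorem IsSplitting.side_eq_of_adj (hW : IsBlock H W S) (hs : IsSplitting H W S S' M side) {u v : V}
    (hv : v ∈ W) (huv : u < v) (hadj : H.Adj u v) (hu : u ∉ S') : side u = side v := by
  have hu' := (hs.isBlock (side v)).mem_of_adj (mem_filter.2 ⟨hv, rfl⟩) huv hadj
  split_ifs at hu' with hv0
  · rcases mem_union.1 hu' with hu' | huS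
    · exact (mem_filter.1 hu').2
    · rw [hv0, hs.eq_zero u (disjoint_right.1 hW.disjoint huS)]
  · exact (mem_filter.1 ((mem_union.1 hu').resolve_right hu)).2

theorem IsSplitting.mem_filter_union_or (hs : IsSplitting H W S S' M side) {u v : V}
    (hu : u ∈ W ∪ S) (huv : u < v) :
    u ∈ ({w ∈ W | side w = side v} : Finset V) ∪ (if side v = 0 then S else S') ∨
      u ∉ S' ∧ v ∉ S' ∧ side u ≠ side v := by
  by_cases hside : side u = side v
  · exact .inl (hs.mem_filter_union hu hside)
  by_cases huS' : u ∈ S'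
  · have hv0 : side v ≠ 0 := fun hv0 ↦ hside ((hs.separator u huS').2.trans hv0.symm)
    rw [if_neg hv0]
    exact .inl (mem_union_right _ huS')
  refine .inr ⟨huS', fun hvS' ↦ ?_, hside⟩
  have hu0 : side u ≠ 0 := fun hu0 ↦ hside (hu0.trans (hs.separator v hvS').2.symm)
  have huW : u ∈ W := not_imp_comm.1 (hs.eq_zero u) hu0
  refine ((hs.isBlock (side u)).lt ?_ (mem_filter.2 ⟨huW, rfl⟩)).asymm huv
  rwa [if_neg hu0]

theorem IsSplitting.injOn_separator (hs : IsSplitting H W S S' M side) {f : ι → V → ℕ}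
    (hf : IsPartialEncoding c {v ∈ W | side v = 0} S f) {j : ι} (hfS : Set.InjOn (f j) S) :
    Set.InjOn (f j) S' := by
  refine hf.injOn_of_isClique (by simpa using hs.isBlock 0) hfS
    (by simpa using (hs.isBlock 1).isClique) fun s hsS' ↦ ?_
  obtain ⟨hsWS, hs0⟩ := hs.separator s hsS'
  simpa [hs0] using hs.mem_filter_union hsWS (v := s) rfl

/-- Rows for each of the three parts of a splitting fit together, because the separator of the
parts on the sides `±1` is encoded before them. -/
theorem IsSplitting.exists_rows (hW : IsBlock H W S) (hs : IsSplitting H W S S' M side)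
    (ih : HasPartialEncodings c M ι) {f₀ : ι → V → ℕ} (hf₀ : ∀ j, Set.InjOn (f₀ j) S) :
    ∃ f : ι → V → ℕ, (∀ j, ∀ v ∉ W, f j v = f₀ j v) ∧
      ∀ g, IsPartialEncoding c {v ∈ W | side v = g} (if g = 0 then S else S') f := by
  have hW₀ : IsBlock H {v ∈ W | side v = 0} S := by simpa using hs.isBlock 0
  obtain ⟨f₁, hf₁_off, hf₁⟩ := ih hW₀ (hs.card_le 0) hf₀
  have hf₁S : ∀ j, Set.InjOn (f₁ j) S := fun j ↦ (hf₀ j).congr fun s hs' ↦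
    (hf₁_off j s (disjoint_right.1 hW₀.disjoint hs')).symm
  have hf₁S' : ∀ j, Set.InjOn (f₁ j) S' := fun j ↦ hs.injOn_separator hf₁ (hf₁S j)
  have exists_part : ∀ g, ∃ h : ι → V → ℕ, (∀ j v, side v = 0 ∨ side v ≠ g → h j v = f₁ j v) ∧
      IsPartialEncoding c {v ∈ W | side v = g} (if g = 0 then S else S') h := fun g ↦ by
    by_cases hg : g = 0
    · subst hg
      exact ⟨f₁, fun _ _ _ ↦ rfl, by simpa using hf₁⟩
    · obtain ⟨h, h_off, hh⟩ := ih (hs.isBlock g) (hs.card_le g) (by simpa [hg] using hf₁S')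
      refine ⟨h, fun j v hv ↦ h_off j v fun hvg ↦ ?_, hh⟩
      have hvg := (mem_filter.1 hvg).2
      exact hv.elim (fun hv0 ↦ hg (hvg ▸ hv0)) (· hvg)
  choose h h_eq hh using exists_part
  refine ⟨fun j v ↦ h (side v) j v, fun j v hv ↦ ?_, fun g ↦ ?_⟩
  · exact (h_eq _ j v (.inl (hs.eq_zero v hv))).trans
      (hf₁_off j v fun hv' ↦ hv (mem_filter.1 hv').1)
  · refine (hh g).congr (hs.isBlock g) fun j v hv ↦ ?_
    rcases mem_union.1 hv with hv | hv
    · rw [(mem_filter.1 hv).2]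
    · have hv0 : side v = 0 := by
        split_ifs at hv
        exacts [hs.eq_zero v (disjoint_right.1 hW.disjoint hv), (hs.separator v hv).2]
      rw [h_eq _ j v (.inl hv0), h_eq g j v (.inl hv0)]

open Classical in
/-- The pattern of the new row of slope `i`: vertices of the separator `S'` get values of their
own, and every other vertex lies on the line of slope `-side v` through the colour of `v`. -/
noncomputable def slopeKey [Ring K] (c : H.Coloring α) (e : α → K) (S' : Finset V)
    (side : V → SignType) (i : K) (v : V) : V ⊕ K :=
  if v ∈ S' then .inl v else .inr (e (c v) - side v * i)

section SlopeKey

variable [Ring K] {e : α → K} {i : K} {u v : V}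

theorem slopeKey_eq_iff_of_notMem (hu : u ∉ S') (hv : v ∉ S') :
    slopeKey c e S' side i u = slopeKey c e S' side i v ↔
      e (c u) - side u * i = e (c v) - side v * i := by
  rw [slopeKey, slopeKey, if_neg hu, if_neg hv, Sum.inr_injective.eq_iff]

theorem slopeKey_eq_iff_of_mem (hu : u ∈ S' ∨ v ∈ S') :
    slopeKey c e S' side i u = slopeKey c e S' side i v ↔ u = v := by
  simp only [slopeKey]
  split_ifs <;> grind

theorem isUnit_signType_cast_sub (h2 : IsUnit (2 : K)) {a b : SignType} (hab : a ≠ b) :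
    IsUnit ((a : K) - b) := by
  have h2' : IsUnit (-1 - 1 : K) := by
    rw [← neg_add', one_add_one_eq_two]
    exact h2.neg
  rcases a.trichotomy with rfl | rfl | rfl <;> rcases b.trichotomy with rfl | rfl | rfl <;>
    simp_all [one_add_one_eq_two]

theorem exists_slopeKey_eq (c : H.Coloring α) (e : α → K) (h2 : IsUnit (2 : K)) (hu : u ∉ S')
    (hv : v ∉ S') (huv : side u ≠ side v) :
    ∃ i, slopeKey c e S' side i u = slopeKey c e S' side i v := by
  obtain ⟨b, hb⟩ := (isUnit_signType_cast_sub h2 huv).exists_right_inv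
  refine ⟨b * (e (c u) - e (c v)), (slopeKey_eq_iff_of_notMem hu hv).2 ?_⟩
  rw [sub_eq_sub_iff_sub_eq_sub, ← sub_mul, ← mul_assoc, hb, one_mul]

theorem slopeKey_one_ne [Nontrivial K] (h2 : IsUnit (2 : K)) (hcuv : c u = c v)
    (huv : side u ≠ side v) : slopeKey c e S' side 1 u ≠ slopeKey c e S' side 1 v := by
  by_cases h : u ∈ S' ∨ v ∈ S'
  · rw [Ne, slopeKey_eq_iff_of_mem h]
    exact fun h ↦ huv (congrArg side h)
  · rw [not_or] at h
    rw [Ne, slopeKey_eq_iff_of_notMem h.1 h.2, hcuv, sub_right_inj, mul_one, mul_one, ← sub_eq_zero]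
    exact (isUnit_signType_cast_sub h2 huv).ne_zero

theorem slopeKey_ne (he : Function.Injective e) (hcuv : c u ≠ c v)
    (huv : u ∉ S' → v ∉ S' → side u = side v) :
    slopeKey c e S' side i u ≠ slopeKey c e S' side i v := by
  by_cases h : u ∈ S' ∨ v ∈ S'
  · rw [Ne, slopeKey_eq_iff_of_mem h]
    exact fun h ↦ hcuv (congrArg c h)
  · rw [not_or] at h
    rw [Ne, slopeKey_eq_iff_of_notMem h.1 h.2, huv h.1 h.2, sub_left_inj]
    exact fun h ↦ hcuv (he h)

end SlopeKey

variable [Ring K] {e : α → K}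

theorem IsSplitting.exists_slopeRow (hW : IsBlock H W S) (hs : IsSplitting H W S S' M side)
    (he : Function.Injective e) {f₀ : V → ℕ} (hf₀ : Set.InjOn f₀ S) (i : K) :
    ∃ f : V → ℕ, (∀ v ∉ W, f v = f₀ v) ∧ ∀ u ∈ W ∪ S, ∀ v ∈ W ∪ S,
      f u = f v ↔ slopeKey c e S' side i u = slopeKey c e S' side i v := by
  have side_eq_zero : ∀ s ∈ S, side s = 0 := fun s hsS ↦
    hs.eq_zero s (disjoint_right.1 hW.disjoint hsS)
  refine exists_extension_eq_iff hW.disjoint hf₀ fun u hu v hv h ↦ ?_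
  by_contra hne
  refine slopeKey_ne he (c.valid (hW.isClique hu hv hne)) (fun _ _ ↦ ?_) h
  rw [side_eq_zero u hu, side_eq_zero v hv]

theorem HasPartialEncodings.two_mul [Nontrivial K] (hH : IsPerfectEliminationOrder H)
    (h2 : IsUnit (2 : K)) (he : Function.Injective e) (ih : HasPartialEncodings c M ι) :
    HasPartialEncodings c (2 * M) (ι ⊕ K) := by
  intro W S f₀ hW hcard hf₀
  obtain ⟨S', side, hs⟩ := hW.exists_isSplitting hH hcard
  obtain ⟨f, hf_off, hf⟩ := hs.exists_rows hW ih fun j ↦ hf₀ (.inl j)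
  choose g hg_off hg using fun i : K ↦ hs.exists_slopeRow (c := c) hW he (hf₀ (.inr i)) i
  refine ⟨Sum.elim f g, Sum.rec hf_off hg_off, ?_, fun v hv ↦ ?_, fun u v hu hv hne hcuv ↦ ?_⟩
  · rintro (j | i) u v hv huv hadj
    · exact (hf (side v)).ne_of_adj j (mem_filter.2 ⟨hv, rfl⟩) huv hadj
    · have hu := hW.mem_of_adj hv huv hadj
      refine (hg i u hu v (mem_union_left S hv)).not.2 (slopeKey_ne he (c.valid hadj) ?_)
      exact fun hu' _ ↦ hs.side_eq_of_adj hW hv huv hadj hu'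
  · refine ((hf (side v)).injOn (mem_filter.2 ⟨hv, rfl⟩)).mono ?_
    rintro u ⟨hu, huv, hcuv, hfuv⟩
    refine ⟨?_, huv, hcuv, fun j ↦ hfuv (.inl j)⟩
    refine (hs.mem_filter_union_or hu huv).resolve_right fun ⟨hu', hv', hside⟩ ↦ ?_
    obtain ⟨i, hi⟩ := exists_slopeKey_eq c e h2 hu' hv' hside
    exact hfuv (.inr i) ((hg i u hu v (mem_union_left S hv)).2 hi)
  · by_cases huv : side u = side v
    · obtain ⟨j, hj⟩ := (hf (side v)).exists_ne (mem_filter.2 ⟨hu, huv⟩)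
        (mem_filter.2 ⟨hv, rfl⟩) hne hcuv
      exact ⟨.inl j, hj⟩
    · exact ⟨.inr 1, (hg 1 u (mem_union_left S hu) v (mem_union_left S hv)).not.2
        (slopeKey_one_ne h2 hcuv huv)⟩

theorem exists_hasPartialEncodings_two_pow {K : Type u} [Ring K] [Nontrivial K] [Fintype K]
    {e : α → K} (c : H.Coloring α)
    (hH : IsPerfectEliminationOrder H) (h2 : IsUnit (2 : K)) (he : Function.Injective e) (L : ℕ) :
    ∃ (ι : Type u) (_ : Fintype ι), Fintype.card ι = Fintype.card K * L + 1 ∧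
      HasPartialEncodings c (2 ^ (L + 1)) ι := by
  induction L with
  | zero => exact ⟨PUnit, inferInstance, by simp, by simpa using hasPartialEncodings_two hH c⟩
  | succ L ih =>
    obtain ⟨ι, _, hcard, hι⟩ := ih
    refine ⟨ι ⊕ K, inferInstance, ?_, ?_⟩
    · rw [Fintype.card_sum, hcard]
      ring
    · rw [pow_succ']
      exact hι.two_mul hH h2 he

end Doubling

section LastRows

open Finset

variable {V α ι : Type*} [LinearOrder V]

/-- The vertex at which the descent `v`, `p v`, `p (p v)`, … stops decreasing. Merging every vertex
`v` with `p v` amounts to giving the value of `root p v` to `v`. -/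
noncomputable def root [WellFoundedLT V] (p : V → V) (v : V) : V :=
  if p v < v then root p (p v) else v
termination_by (wellFounded_lt (α := V)).wrap v
decreasing_by assumption

theorem root_of_lt [WellFoundedLT V] {p : V → V} {v : V} (h : p v < v) :
    root p v = root p (p v) := by
  rw [root, if_pos h]

theorem root_of_eq [WellFoundedLT V] {p : V → V} {v : V} (h : p v = v) : root p v = v := by
  rw [root, if_neg h.not_lt]

theorem root_le [WellFoundedLT V] (p : V → V) (v : V) : root p v ≤ v := by
  induction v using WellFoundedLT.induction with
  | ind v ih =>
    rw [root]
    split_ifs with h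
    exacts [(ih _ h).trans h.le, le_rfl]

theorem apply_root_eq_or_add_eq [WellFoundedLT V] [AddCommGroup α] {c : V → α} {p : V → V} {r : α}
    (hp : ∀ v, p v < v → c (p v) + c v = r) (v : V) :
    c (root p v) = c v ∨ c (root p v) + c v = r := by
  induction v using WellFoundedLT.induction with
  | ind v ih =>
    rw [root]
    split_ifs with h
    · have := hp v h
      rcases ih _ h with ih | ih
      · exact .inr (ih ▸ this)
      · exact .inl (add_right_cancel (ih.trans (this.symm.trans (add_comm _ _))))
    · exact .inl rfl

/-- The pattern of the last row for the sum `r`: a vertex whose colour is half of `r` gets this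
colour, and every other vertex gets its root. -/
noncomputable def sumKey [WellFoundedLT V] [AddCommGroup α] (c : V → α) (p : V → V) (r : α)
    (v : V) : α ⊕ V :=
  open Classical in if c v + c v = r then .inl (c v) else .inr (root p v)

section SumKey

variable [WellFoundedLT V] [AddCommGroup α] {c : V → α} {p : V → V} {r : α} {u v : V}

theorem sumKey_eq_of_color_eq (huv : c u = c v) (hr : c u + c v = r) :
    sumKey c p r u = sumKey c p r v := by
  rw [sumKey, sumKey, huv, if_pos (huv ▸ hr), if_pos (huv ▸ hr)]

theorem sumKey_eq_iff_of_color_ne (huv : c u ≠ c v) (hr : c u + c v = r) :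
    sumKey c p r u = sumKey c p r v ↔ root p u = root p v := by
  rw [sumKey, sumKey, if_neg, if_neg, Sum.inr_injective.eq_iff]
  · exact fun h ↦ huv (add_right_cancel (hr.trans h.symm))
  · exact fun h ↦ huv (add_left_cancel (h.trans hr.symm))

theorem sumKey_ne_of_add_ne (hp : ∀ v, p v < v → c (p v) + c v = r) (huv : c u ≠ c v)
    (hr : c u + c v ≠ r) : sumKey c p r u ≠ sumKey c p r v := by
  have hu := apply_root_eq_or_add_eq hp u
  have hv := apply_root_eq_or_add_eq hp v
  unfold sumKey
  split_ifs with h h'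
  · simpa using huv
  · exact Sum.inl_ne_inr
  · exact Sum.inr_ne_inl
  · rw [Sum.inr_injective.ne_iff]
    intro hroot
    rw [hroot] at hu
    grind

end SumKey

theorem exists_sumRow [Fintype V] [AddCommGroup α] [Countable α] {c : V → α} {f : ι → V → ℕ}
    (G : SimpleGraph V) (hinj : ∀ v, Set.InjOn c (unmergedBefore c f univ v))
    (hadj : ∀ ⦃u v⦄, u < v → G.Adj u v → u ∈ unmergedBefore c f univ v) (r : α) :
    ∃ g : V → ℕ, (∀ ⦃u v⦄, u < v → G.Adj u v → g u ≠ g v) ∧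
      (∀ u v, c u = c v → c u + c v = r → g u = g v) ∧
      (∀ u v, c u ≠ c v → c u + c v ≠ r → g u ≠ g v) ∧
      ∀ v, ∀ u ∈ unmergedBefore c f univ v, c u + c v = r → ¬G.Adj u v → g u = g v := by
  have exists_target : ∀ v, ∃ w,
      (w ∈ unmergedBefore c f univ v ∧ c w + c v = r ∧ ¬G.Adj w v) ∨
        w = v ∧ ∀ u ∈ unmergedBefore c f univ v, c u + c v = r → G.Adj u v := fun v ↦ by
    by_cases h : ∃ w ∈ unmergedBefore c f univ v, c w + c v = r ∧ ¬G.Adj w v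
    · exact h.imp fun w hw ↦ .inl hw
    · push Not at h
      exact ⟨v, .inr ⟨rfl, h⟩⟩
  choose p hp using exists_target
  have add_eq_of_lt : ∀ v, p v < v → c (p v) + c v = r := fun v hv ↦
    ((hp v).resolve_right fun h ↦ hv.ne h.1).2.1
  have eq_of_add_eq : ∀ v, ∀ u ∈ unmergedBefore c f univ v, c u + c v = r →
      ∀ w ∈ unmergedBefore c f univ v, c w + c v = r → w = u := fun v u hu hur w hw hwr ↦
    hinj v hw hu (add_right_cancel (hwr.trans hur.symm))
  obtain ⟨e, he⟩ := Countable.exists_injective_nat (α ⊕ V)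
  refine ⟨e ∘ sumKey c p r, fun u v huv hG ↦ he.ne ?_, fun u v hcuv hr ↦ ?_,
    fun u v hcuv hr ↦ he.ne (sumKey_ne_of_add_ne add_eq_of_lt hcuv hr), fun v u hu hr hG ↦ ?_⟩
  · have hu := hadj huv hG
    by_cases hr : c u + c v = r
    · have hpv : p v = v := ((hp v).resolve_left fun h ↦
        h.2.2 (eq_of_add_eq v u hu hr _ h.1 h.2.1 ▸ hG)).1
      rw [Ne, sumKey_eq_iff_of_color_ne hu.2.2.1 hr, root_of_eq hpv]
      exact ((root_le p u).trans_lt huv).ne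
    · exact sumKey_ne_of_add_ne add_eq_of_lt hu.2.2.1 hr
  · exact congrArg e (sumKey_eq_of_color_eq hcuv hr)
  · have hpv : p v = u := by
      obtain ⟨hw, hwr, -⟩ := (hp v).resolve_right fun h ↦ hG (h.2 u hu hr)
      exact eq_of_add_eq v u hu hr _ hw hwr
    refine congrArg e ((sumKey_eq_iff_of_color_ne hu.2.2.1 hr).2 ?_)
    rw [root_of_lt (hpv.trans_lt hu.2.1), hpv]

end LastRows

section Encodings

open Finset

variable {V : Type*} {G : SimpleGraph V}

theorem pdim_le_card {ι : Type*} [Fintype ι] (φ : ι → V → ℕ)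
    (hinj : ∀ u v, u ≠ v → ∃ j, φ j u ≠ φ j v)
    (hφ : ∀ u v, u ≠ v → (G.Adj u v ↔ ∀ j, φ j u ≠ φ j v)) : pdim G ≤ Fintype.card ι := by
  let σ := (Fintype.equivFin ι).symm
  refine Nat.sInf_le ⟨fun v i ↦ φ (σ i) v, fun u v huv ↦ ?_, fun u v hne ↦ ?_⟩
  · by_contra hne
    obtain ⟨j, hj⟩ := hinj u v hne
    obtain ⟨i, rfl⟩ := σ.surjective j
    exact hj (congrFun huv i)
  · rw [hφ u v hne, σ.surjective.forall]

theorem pdim_bot_le_two [Countable V] : pdim (⊥ : SimpleGraph V) ≤ 2 := by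
  obtain ⟨e, he⟩ := Countable.exists_injective_nat V
  refine pdim_le_card ![0, e] (fun u v hne ↦ ⟨1, he.ne hne⟩) fun u v _ ↦ ?_
  simp

theorem pdim_le_of_isPartialEncoding {α ι : Type*} [Fintype V] [LinearOrder V] [Fintype ι]
    [AddCommGroup α] [Nontrivial α] [Fintype α] {H : SimpleGraph V} (hGH : G ≤ H)
    {c : H.Coloring α} {f : ι → V → ℕ} (hf : IsPartialEncoding c univ ∅ f) :
    pdim G ≤ Fintype.card ι + Fintype.card α := by
  have hinj : ∀ v, Set.InjOn c (unmergedBefore c f univ v) := fun v ↦ by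
    simpa only [union_empty] using hf.injOn (mem_univ v)
  have hadj : ∀ ⦃u v⦄, u < v → G.Adj u v → u ∈ unmergedBefore c f univ v := fun u v huv hG ↦
    ⟨mem_univ u, huv, c.valid (hGH hG), fun j ↦ hf.ne_of_adj j (mem_univ v) huv (hGH hG)⟩
  choose g hg_adj hg_half hg_ne hg_merge using exists_sumRow G hinj hadj
  rw [← Fintype.card_sum]
  have hφ_of_lt : ∀ ⦃u v⦄, u < v → (G.Adj u v ↔ ∀ j, Sum.elim f g j u ≠ Sum.elim f g j v) := by
    refine fun u v huv ↦ ⟨fun hG ↦ ?_, fun h ↦ ?_⟩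
    · exact Sum.rec (hadj huv hG).2.2.2 fun r ↦ hg_adj r huv hG
    · by_contra hG
      by_cases hcuv : c u = c v
      · exact h (.inr _) (hg_half _ u v hcuv rfl)
      · exact h (.inr _) (hg_merge _ v u ⟨mem_univ u, huv, hcuv, fun j ↦ h (.inl j)⟩ rfl hG)
  refine pdim_le_card (Sum.elim f g) (fun u v hne ↦ ?_) fun u v hne ↦ ?_
  · by_cases hcuv : c u = c v
    · obtain ⟨j, hj⟩ := hf.exists_ne (mem_univ u) (mem_univ v) hne hcuv
      exact ⟨.inl j, hj⟩
    · obtain ⟨r, hr⟩ := exists_ne (c u + c v)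
      exact ⟨.inr r, hg_ne r u v hcuv hr.symm⟩
  · rcases lt_or_gt_of_ne hne with huv | hvu
    · exact hφ_of_lt huv
    · simpa only [G.adj_comm, ne_comm] using hφ_of_lt hvu

theorem HasTreewidthLE.eq_bot (h : HasTreewidthLE G 0) : G = ⊥ := by
  obtain ⟨I, _, T, X, -, -, -, hadj, -, hcard⟩ := h
  refine eq_bot_iff.2 fun u v huv ↦ ?_
  obtain ⟨i, hu, hv⟩ := hadj u v huv
  exact huv.ne (card_le_one.1 (hcard i) u hu v hv)

theorem pdim_le_of_colorable [Fintype V] [LinearOrder V] {H : SimpleGraph V} (hGH : G ≤ H)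
    (hH : IsPerfectEliminationOrder H) {k q : ℕ} (hk : 2 ≤ k) (hcol : H.Colorable k) (hkq : k ≤ q)
    (hq : Odd q) : pdim G ≤ q * Nat.log 2 (Fintype.card V) + 1 + k := by
  have : NeZero k := ⟨by omega⟩
  have : NeZero q := ⟨by omega⟩
  have : Fact (1 < k) := ⟨hk⟩
  have : Fact (1 < q) := ⟨by omega⟩
  have c : H.Coloring (ZMod k) := hcol.toColoring (ZMod.card k).ge
  obtain ⟨e⟩ : Nonempty (ZMod k ↪ ZMod q) := Function.Embedding.nonempty_of_card_le (by simpa)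
  have h2 : IsUnit (2 : ZMod q) := by
    exact_mod_cast (ZMod.isUnit_iff_coprime 2 q).2 (Nat.coprime_two_left.2 hq)
  obtain ⟨ι, _, hι, hrows⟩ := exists_hasPartialEncodings_two_pow c hH h2 e.injective
    (Nat.log 2 (Fintype.card V))
  have hblock : IsBlock H univ ∅ := ⟨by simp, by simp, by simp⟩
  obtain ⟨f, -, hf⟩ := hrows (f₀ := 0) hblock (Nat.lt_pow_succ_log_self one_lt_two _).le (by simp)
  simpa only [hι, ZMod.card] using pdim_le_of_isPartialEncoding hGH hf

theorem HasTreewidthLE.pdim_le [Fintype V] {t : ℕ} (h : HasTreewidthLE G t) :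
    pdim G ≤ (t + 2) * (Nat.log 2 (Fintype.card V) + 1) := by
  obtain rfl | ht := t.eq_zero_or_pos
  · rw [h.eq_bot]
    exact pdim_bot_le_two.trans (Nat.le_mul_of_pos_right 2 (Nat.succ_pos _))
  obtain ⟨_, H, hGH, hH, hcol⟩ := h.exists_isPerfectEliminationOrder
  obtain ⟨q, hq, hq_le, hq_odd⟩ : ∃ q, t + 1 ≤ q ∧ q ≤ t + 2 ∧ Odd q := by
    rcases Nat.even_or_odd (t + 1) with heven | hodd
    exacts [⟨t + 2, by omega, le_rfl, heven.add_one⟩, ⟨t + 1, le_rfl, by omega, hodd⟩]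
  calc
    pdim G ≤ q * Nat.log 2 (Fintype.card V) + 1 + (t + 1) :=
      pdim_le_of_colorable hGH hH (by omega) hcol hq hq_odd
    _ ≤ (t + 2) * Nat.log 2 (Fintype.card V) + 1 + (t + 1) := by gcongr
    _ = (t + 2) * (Nat.log 2 (Fintype.card V) + 1) := by ring

end Encodings

/-- Every graph `G` on `n` vertices with treewidth at most `t` has product
dimension at most `(t+2)(log₂ n + 1)`. -/
theorem pdim_treewidth {V : Type*} [Fintype V] [DecidableEq V] (G : SimpleGraph V)
    (t : ℕ) (htw : HasTreewidthLE G t) :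
    (pdim G : ℝ) ≤ (t + 2) * (Real.logb 2 (Fintype.card V) + 1) := by
  calc
    (pdim G : ℝ) ≤ (t + 2) * (Nat.log 2 (Fintype.card V) + 1) := by exact_mod_cast htw.pdim_le
    _ ≤ (t + 2) * (Real.logb 2 (Fintype.card V) + 1) := by
      gcongr
      exact_mod_cast Real.natLog_le_logb (Fintype.card V) 2
end

section
/- Every k-degenerate graph G on n ≥ 2 vertices (k ≥ 1) has product dimension at most ⌈8.317 · k · log₂ n⌉ + 1. -/
open scoped Classical

/-
Color the vertices one at a time, each after its at most `k` neighbors among the vertices already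
colored, with a uniformly random color among those these neighbors do not use. With `k + d` colors
there are always at least `d` to choose from, so any two vertices agree with probability at most
`1 / d`. If `u` comes before a non-adjacent `v`, the color of `u` is therefore free for `v` with
probability at least `1 - k / d`, and is then chosen with probability at least `1 / (k + d)`. Hence
some proper coloring of this kind makes a fraction `p = (1 - k / d) / (k + d)` of any given set of
non-adjacent pairs agree, and iterating greedily, at most `(1 - p) ^ l * n ^ 2` pairs are
left after `l` colorings. When none is left, one further, injective coloring gives an encoding.
-/

open Finset
open scoped ENNReal

section FirstMoment

variable {Ω ι : Type*} (μ : PMF Ω)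

theorem toOuterMeasure_univ : μ.toOuterMeasure Set.univ = 1 :=
  (μ.toOuterMeasure_apply_eq_one_iff _).2 (Set.subset_univ _)

theorem toOuterMeasure_compl_le_one_sub {A : Set Ω} {p : ℝ≥0∞} (h : p ≤ μ.toOuterMeasure A) :
    μ.toOuterMeasure Aᶜ ≤ 1 - p := by
  let _ : MeasurableSpace Ω := ⊤
  rw [← μ.toMeasure_apply_eq_toOuterMeasure] at h ⊢
  rw [MeasureTheory.prob_compl_eq_one_sub .of_discrete]
  exact tsub_le_tsub_left h 1

theorem exists_mem_support_card_filter_mem_le (P : Finset ι) (E : ι → Set Ω) {q : ℝ≥0∞}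
    (hE : ∀ x ∈ P, μ.toOuterMeasure (E x) ≤ q) :
    ∃ ω ∈ μ.support, (#{x ∈ P | ω ∈ E x} : ℝ≥0∞) ≤ q * #P := by
  let _ : MeasurableSpace Ω := ⊤
  have hnull : μ.toMeasure μ.supportᶜ = 0 :=
    (μ.toMeasure_apply_eq_zero_iff .of_discrete).2 disjoint_compl_right
  obtain ⟨ω, hω, hle⟩ := MeasureTheory.exists_notMem_null_le_lintegral
    (f := fun ω => ∑ x ∈ P, (E x).indicator 1 ω) measurable_from_top.aemeasurable hnull
  refine ⟨ω, not_not.1 hω, ?_⟩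
  calc (#{x ∈ P | ω ∈ E x} : ℝ≥0∞) = ∑ x ∈ P, (E x).indicator 1 ω := by
        simp only [Set.indicator_apply, Pi.one_apply, sum_boole]
    _ ≤ ∫⁻ ω, ∑ x ∈ P, (E x).indicator 1 ω ∂μ.toMeasure := hle
    _ = ∑ x ∈ P, μ.toOuterMeasure (E x) := by
        rw [MeasureTheory.lintegral_finsetSum _ fun _ _ => measurable_from_top]
        refine sum_congr rfl fun x _ => ?_
        rw [MeasureTheory.lintegral_indicator_one .of_discrete,
          μ.toMeasure_apply_eq_toOuterMeasure]
    _ ≤ ∑ _x ∈ P, q := sum_le_sum hE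
    _ = q * #P := by rw [sum_const, nsmul_eq_mul, mul_comm]

theorem exists_mem_support_card_filter_forall_mem_le (P : Finset ι) (E : ι → Set Ω) {q : ℝ≥0∞}
    (hE : ∀ x ∈ P, μ.toOuterMeasure (E x) ≤ q) (l : ℕ) :
    ∃ f : Fin l → Ω, (∀ i, f i ∈ μ.support) ∧
      (#{x ∈ P | ∀ i, f i ∈ E x} : ℝ≥0∞) ≤ q ^ l * #P := by
  induction l with
  | zero => exact ⟨Fin.elim0, fun i => i.elim0, by simp⟩
  | succ l ih =>
    obtain ⟨f, hf, hcard⟩ := ih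
    obtain ⟨ω, hω, hle⟩ := exists_mem_support_card_filter_mem_le μ {x ∈ P | ∀ i, f i ∈ E x} E
      fun x hx => hE x (mem_filter.1 hx).1
    refine ⟨Fin.cons ω f, Fin.cases hω hf, ?_⟩
    simp only [Fin.forall_fin_succ, Fin.cons_zero, Fin.cons_succ]
    calc (#{x ∈ P | ω ∈ E x ∧ ∀ i, f i ∈ E x} : ℝ≥0∞)
        = #{x ∈ {x ∈ P | ∀ i, f i ∈ E x} | ω ∈ E x} := by
          rw [filter_filter]; simp only [and_comm]
      _ ≤ q * (q ^ l * #P) := hle.trans (by gcongr)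
      _ = q ^ (l + 1) * #P := by rw [pow_succ', mul_assoc]

theorem exists_mem_support_forall_exists_notMem (P : Finset ι) (E : ι → Set Ω) {q : ℝ≥0∞}
    (hE : ∀ x ∈ P, μ.toOuterMeasure (E x) ≤ q) {l : ℕ} (hl : q ^ l * #P < 1) :
    ∃ f : Fin l → Ω, (∀ i, f i ∈ μ.support) ∧ ∀ x ∈ P, ∃ i, f i ∉ E x := by
  obtain ⟨f, hf, hcard⟩ := exists_mem_support_card_filter_forall_mem_le μ P E hE l
  have hempty := card_eq_zero.1 (Nat.cast_lt_one.1 (hcard.trans_lt hl))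
  exact ⟨f, hf, fun x hx => not_forall.1 (filter_eq_empty_iff.1 hempty hx)⟩

end FirstMoment

section Recolor

variable {V α : Type*}

/-- The probability that a random map `V → α` with law `μ` takes the same value at `u` and `v`. -/
noncomputable def agreeProb (μ : PMF (V → α)) (u v : V) : ℝ≥0∞ :=
  μ.toOuterMeasure {φ | φ u = φ v}

theorem agreeProb_comm (μ : PMF (V → α)) (u v : V) : agreeProb μ u v = agreeProb μ v u := by
  simp only [agreeProb, eq_comm]

theorem one_sub_card_mul_le_toOuterMeasure_notMem_image (μ : PMF (V → α)) {N : Finset V} {u : V}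
    {r : ℝ≥0∞} (hr : ∀ x ∈ N, agreeProb μ u x ≤ r) :
    1 - #N * r ≤ μ.toOuterMeasure {φ | φ u ∉ N.image φ} := by
  have hcover : Set.univ ⊆ {φ : V → α | φ u ∉ N.image φ} ∪ ⋃ x ∈ N, {φ | φ u = φ x} := by
    intro φ _
    by_cases h : φ u ∈ N.image φ
    · obtain ⟨x, hx, hxu⟩ := mem_image.1 h
      exact .inr (Set.mem_biUnion hx hxu.symm)
    · exact .inl h
  rw [tsub_le_iff_right]
  calc (1 : ℝ≥0∞) = μ.toOuterMeasure Set.univ := (toOuterMeasure_univ μ).symm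
    _ ≤ μ.toOuterMeasure {φ | φ u ∉ N.image φ} + μ.toOuterMeasure (⋃ x ∈ N, {φ | φ u = φ x}) :=
        (MeasureTheory.measure_mono hcover).trans (MeasureTheory.measure_union_le _ _)
    _ ≤ μ.toOuterMeasure {φ | φ u ∉ N.image φ} + ∑ x ∈ N, agreeProb μ u x := by
        gcongr
        exact MeasureTheory.measure_biUnion_finset_le _ _
    _ ≤ μ.toOuterMeasure {φ | φ u ∉ N.image φ} + #N * r := by
        gcongr
        exact (sum_le_card_nsmul _ _ _ hr).trans_eq (nsmul_eq_mul _ _)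

variable [Fintype α] (μ : PMF (V → α)) (v : V) {N : Finset V}

/-- The colors that the map `φ` does not use on `N`. -/
noncomputable def freeColors (N : Finset V) (φ : V → α) : Finset α :=
  (N.image φ)ᶜ

theorem card_sub_le_card_freeColors (N : Finset V) (φ : V → α) :
    Fintype.card α - #N ≤ #(freeColors N φ) := by
  rw [freeColors, card_compl]
  exact Nat.sub_le_sub_left card_image_le _

theorem freeColors_nonempty (hN : #N < Fintype.card α) (φ : V → α) : (freeColors N φ).Nonempty :=
  card_pos.1 ((Nat.sub_pos_of_lt hN).trans_le (card_sub_le_card_freeColors N φ))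

/-- The law of the random map obtained from one with law `μ` by changing its value at `v` to a
uniformly random color among those not used on `N`. -/
noncomputable def recolor (hN : #N < Fintype.card α) : PMF (V → α) :=
  μ.bind fun φ =>
    (PMF.uniformOfFinset (freeColors N φ) (freeColors_nonempty hN φ)).map (Function.update φ v)

theorem mem_support_recolor_iff (hN : #N < Fintype.card α) (ψ : V → α) :
    ψ ∈ (recolor μ v hN).support ↔
      ∃ φ ∈ μ.support, ∃ c ∈ freeColors N φ, Function.update φ v c = ψ := by
  simp only [recolor, PMF.mem_support_bind_iff, PMF.mem_support_map_iff,
    PMF.mem_support_uniformOfFinset_iff]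

variable {v}

theorem agreeProb_recolor_of_ne (hN : #N < Fintype.card α) {a b : V} (ha : a ≠ v) (hb : b ≠ v) :
    agreeProb (recolor μ v hN) a b = agreeProb μ a b := by
  rw [agreeProb, recolor, PMF.toOuterMeasure_bind_apply, agreeProb, PMF.toOuterMeasure_apply]
  refine tsum_congr fun φ => ?_
  rw [PMF.toOuterMeasure_map_apply, Set.preimage_ofPred_eq, Set.indicator_apply]
  simp only [Function.update_of_ne ha, Function.update_of_ne hb, Set.mem_ofPred_eq]
  split_ifs with h
  · simp only [h, Set.ofPred_true, toOuterMeasure_univ, mul_one]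
  · simp only [h, Set.ofPred_false, MeasureTheory.measure_empty, mul_zero]

theorem agreeProb_recolor_self (hN : #N < Fintype.card α) {u : V} (hu : u ≠ v) :
    agreeProb (recolor μ v hN) v u =
      ∑' φ, μ φ * if φ u ∈ freeColors N φ then (#(freeColors N φ) : ℝ≥0∞)⁻¹ else 0 := by
  rw [agreeProb, recolor, PMF.toOuterMeasure_bind_apply]
  refine tsum_congr fun φ => ?_
  have hpre : Function.update φ v ⁻¹' {ψ | ψ v = ψ u} = {φ u} := by
    ext c
    simp only [Set.mem_preimage, Set.mem_ofPred_eq, Function.update_self,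
      Function.update_of_ne hu, Set.mem_singleton_iff]
  rw [PMF.toOuterMeasure_map_apply, hpre, PMF.toOuterMeasure_apply_singleton,
    PMF.uniformOfFinset_apply]

theorem agreeProb_recolor_self_le (hN : #N < Fintype.card α) {u : V} (hu : u ≠ v) :
    agreeProb (recolor μ v hN) v u ≤ ((Fintype.card α - #N : ℕ) : ℝ≥0∞)⁻¹ := by
  rw [agreeProb_recolor_self μ hN hu]
  calc ∑' φ, μ φ * (if φ u ∈ freeColors N φ then (#(freeColors N φ) : ℝ≥0∞)⁻¹ else 0)
      ≤ ∑' φ, μ φ * ((Fintype.card α - #N : ℕ) : ℝ≥0∞)⁻¹ := by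
        gcongr with φ
        split_ifs
        · gcongr
          exact card_sub_le_card_freeColors N φ
        · exact zero_le
    _ = ((Fintype.card α - #N : ℕ) : ℝ≥0∞)⁻¹ := by rw [ENNReal.tsum_mul_right, μ.tsum_coe, one_mul]

theorem le_agreeProb_recolor_self (hN : #N < Fintype.card α) {u : V} (hu : u ≠ v) {r : ℝ≥0∞}
    (hr : ∀ x ∈ N, agreeProb μ u x ≤ r) :
    (1 - #N * r) / Fintype.card α ≤ agreeProb (recolor μ v hN) v u := by
  rw [agreeProb_recolor_self μ hN hu]
  calc (1 - #N * r) / Fintype.card α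
      ≤ μ.toOuterMeasure {φ | φ u ∉ N.image φ} / Fintype.card α := by
        gcongr
        exact one_sub_card_mul_le_toOuterMeasure_notMem_image μ hr
    _ = ∑' φ, {φ : V → α | φ u ∉ N.image φ}.indicator μ φ * (Fintype.card α : ℝ≥0∞)⁻¹ := by
        rw [ENNReal.tsum_mul_right, PMF.toOuterMeasure_apply, div_eq_mul_inv]
    _ ≤ ∑' φ, μ φ * if φ u ∈ freeColors N φ then (#(freeColors N φ) : ℝ≥0∞)⁻¹ else 0 := by
        refine ENNReal.tsum_le_tsum fun φ => ?_
        simp only [freeColors, mem_compl, Set.indicator_apply, Set.mem_ofPred_eq]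
        split_ifs
        · rw [zero_mul, mul_zero]
        · gcongr
          exact card_le_univ _

end Recolor

section SpreadColoring

variable {V α : Type*} {G : SimpleGraph V} {k d : ℕ}

/-- `G` is `k`-degenerate: each nonempty finite induced subgraph has a vertex of degree at most
`k`. -/
def IsDegenerate (G : SimpleGraph V) (k : ℕ) : Prop :=
  ∀ s : Finset V, s.Nonempty → ∃ v ∈ s, #{u ∈ s | G.Adj v u} ≤ k

/-- The random map with law `μ` is a proper coloring of `G` on `s`, under which two vertices of
`s` agree with probability at most `1 / d`, and at least `(1 - k / d) / |α|` if they are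
non-adjacent. -/
structure IsSpreadColoring [Fintype α] (G : SimpleGraph V) (k d : ℕ) (s : Set V)
    (μ : PMF (V → α)) : Prop where
  proper : ∀ φ ∈ μ.support, s.Pairwise fun u v => G.Adj u v → φ u ≠ φ v
  agreeProb_le : s.Pairwise fun u v => agreeProb μ u v ≤ (d : ℝ≥0∞)⁻¹
  le_agreeProb : s.Pairwise fun u v => ¬G.Adj u v →
    (1 - k / d : ℝ≥0∞) / Fintype.card α ≤ agreeProb μ u v

variable [Fintype α]

theorem IsSpreadColoring.insert_recolor {s : Finset V} {μ : PMF (V → α)}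
    (hμ : IsSpreadColoring G k d s μ) {v : V} (hv : v ∉ s) (hdeg : #{u ∈ s | G.Adj v u} ≤ k)
    (hα : k + d ≤ Fintype.card α) (hN : #{u ∈ s | G.Adj v u} < Fintype.card α) :
    IsSpreadColoring G k d (insert v s : Finset V) (recolor μ v hN) := by
  have hne : ∀ {u}, u ∈ s → u ≠ v := fun hu h => hv (h ▸ hu)
  have hv' : v ∉ (s : Set V) := hv
  simp only [coe_insert]
  refine ⟨fun ψ hψ => ?_, ?_, ?_⟩
  · obtain ⟨φ, hφ, c, hc, rfl⟩ := (mem_support_recolor_iff μ v hN ψ).1 hψ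
    have : Std.Symm fun u w => G.Adj u w → Function.update φ v c u ≠ Function.update φ v c w :=
      ⟨fun _ _ h hadj => (h hadj.symm).symm⟩
    rw [Set.pairwise_insert_of_symm_of_notMem hv']
    refine ⟨fun a ha b hb hab hadj => ?_, fun u hu hadj => ?_⟩
    · rw [Function.update_of_ne (hne ha), Function.update_of_ne (hne hb)]
      exact hμ.proper φ hφ ha hb hab hadj
    · rw [Function.update_self, Function.update_of_ne (hne hu)]
      rintro rfl
      exact mem_compl.1 hc (mem_image_of_mem φ (mem_filter.2 ⟨hu, hadj⟩))
  · have : Std.Symm fun u w => agreeProb (recolor μ v hN) u w ≤ (d : ℝ≥0∞)⁻¹ :=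
      ⟨fun u w h => (agreeProb_comm _ w u).trans_le h⟩
    rw [Set.pairwise_insert_of_symm_of_notMem hv']
    refine ⟨fun a ha b hb hab => ?_, fun u hu => ?_⟩
    · exact (agreeProb_recolor_of_ne μ hN (hne ha) (hne hb)).trans_le (hμ.agreeProb_le ha hb hab)
    · refine (agreeProb_recolor_self_le μ hN (hne hu)).trans ?_
      gcongr
      lia
  · have : Std.Symm fun u w => ¬G.Adj u w →
        (1 - k / d) / Fintype.card α ≤ agreeProb (recolor μ v hN) u w :=
      ⟨fun u w h hadj => (h (hadj ∘ .symm)).trans_eq (agreeProb_comm _ u w)⟩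
    rw [Set.pairwise_insert_of_symm_of_notMem hv']
    refine ⟨fun a ha b hb hab hadj => ?_, fun u hu hadj => ?_⟩
    · rw [agreeProb_recolor_of_ne μ hN (hne ha) (hne hb)]
      exact hμ.le_agreeProb ha hb hab hadj
    · have hagree : ∀ x ∈ ({u ∈ s | G.Adj v u} : Finset V), agreeProb μ u x ≤ (d : ℝ≥0∞)⁻¹ := by
        intro x hx
        obtain ⟨hxs, hvx⟩ := mem_filter.1 hx
        exact hμ.agreeProb_le hu hxs fun h => hadj (h ▸ hvx)
      rw [div_eq_mul_inv (k : ℝ≥0∞)]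
      refine le_trans ?_ (le_agreeProb_recolor_self μ hN (hne hu) hagree)
      gcongr

theorem IsDegenerate.exists_isSpreadColoring (hG : IsDegenerate G k) (hd : 0 < d)
    (hα : k + d ≤ Fintype.card α) (s : Finset V) :
    ∃ μ : PMF (V → α), IsSpreadColoring G k d s μ := by
  induction s using Finset.strongInduction with
  | H s ih =>
    obtain rfl | hs := s.eq_empty_or_nonempty
    · obtain ⟨c⟩ : Nonempty α := Fintype.card_pos_iff.1 (by lia)
      exact ⟨PMF.pure fun _ => c, by constructor <;> simp⟩
    · obtain ⟨v, hv, hdeg⟩ := hG s hs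
      obtain ⟨μ, hμ⟩ := ih (s.erase v) (erase_ssubset hv)
      have hdeg' : #{u ∈ s.erase v | G.Adj v u} ≤ k :=
        (card_le_card (filter_subset_filter _ (erase_subset v s))).trans hdeg
      rw [← insert_erase hv]
      exact ⟨_, hμ.insert_recolor (notMem_erase v s) hdeg' hα (by lia)⟩

theorem IsDegenerate.exists_colorings_cover [Fintype V] (hG : IsDegenerate G k) (hd : 0 < d)
    (hα : k + d ≤ Fintype.card α) {l : ℕ}
    (hl : (1 - (1 - k / d : ℝ≥0∞) / Fintype.card α) ^ l * Fintype.card V ^ 2 < 1) :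
    ∃ c : Fin l → G.Coloring α, ∀ u v, u ≠ v → ¬G.Adj u v → ∃ i, c i u = c i v := by
  obtain ⟨μ, hμ⟩ := hG.exists_isSpreadColoring hd hα univ
  let P : Finset (V × V) := {x | x.1 ≠ x.2 ∧ ¬G.Adj x.1 x.2}
  have hP : (#P : ℝ≥0∞) ≤ Fintype.card V ^ 2 := by
    rw [sq, ← Nat.cast_mul, ← Fintype.card_prod]
    exact_mod_cast card_le_univ P
  have hdiffer : ∀ x ∈ P, μ.toOuterMeasure {φ | φ x.1 = φ x.2}ᶜ ≤
      1 - (1 - k / d : ℝ≥0∞) / Fintype.card α := by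
    intro x hx
    obtain ⟨-, hne, hadj⟩ := mem_filter.1 hx
    exact toOuterMeasure_compl_le_one_sub μ
      (hμ.le_agreeProb (mem_univ x.1) (mem_univ x.2) hne hadj)
  obtain ⟨f, hf, hcover⟩ := exists_mem_support_forall_exists_notMem μ P _ hdiffer
    ((mul_le_mul_right hP _).trans_lt hl)
  refine ⟨fun i => .mk (f i) fun {u v} hadj =>
    hμ.proper _ (hf i) (mem_univ u) (mem_univ v) hadj.ne hadj, fun u v hne hadj => ?_⟩
  obtain ⟨i, hi⟩ := hcover (u, v) (mem_filter.2 ⟨mem_univ _, hne, hadj⟩)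
  exact ⟨i, not_not.1 hi⟩

end SpreadColoring

section ProductDimension

variable {V α : Type*} {G : SimpleGraph V}

theorem pdim_le_succ_of_colorings [Countable V] [Countable α] {l : ℕ} (c : Fin l → G.Coloring α)
    (hc : ∀ u v, u ≠ v → ¬G.Adj u v → ∃ i, c i u = c i v) : pdim G ≤ l + 1 := by
  obtain ⟨e, he⟩ := exists_injective_nat V
  obtain ⟨g, hg⟩ := exists_injective_nat α
  refine Nat.sInf_le ⟨fun u => Fin.cons (e u) fun i => g (c i u), fun u v huv => he ?_,
    fun u v hne => ?_⟩
  · exact congrFun huv 0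
  · simp only [Fin.forall_fin_succ, Fin.cons_zero, Fin.cons_succ, he.ne_iff, hg.ne_iff]
    refine ⟨fun hadj => ⟨hne, fun i => (c i).valid hadj⟩, fun ⟨_, hdiff⟩ => ?_⟩
    by_contra hadj
    obtain ⟨i, hi⟩ := hc u v hne hadj
    exact hdiff i hi

/-- The lower bound for the probability that a random coloring with `k + d` colors gives two
non-adjacent vertices the same color. -/
noncomputable def agreeBound (k d : ℝ) : ℝ :=
  (1 - k / d) / (k + d)

theorem agreeBound_mem_Icc {k d : ℝ} (hk : 0 ≤ k) (hkd : k ≤ d) (hd : 1 ≤ d) :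
    agreeBound k d ∈ Set.Icc 0 1 := by
  have hratio : k / d ≤ 1 := (div_le_one (by positivity)).2 hkd
  refine ⟨div_nonneg (sub_nonneg.2 hratio) (by positivity), (div_le_one (by positivity)).2 ?_⟩
  have : 0 ≤ k / d := by positivity
  linarith

theorem ofReal_agreeBound {k d : ℕ} (hd : 0 < d) :
    ENNReal.ofReal (agreeBound k d) = (1 - k / d : ℝ≥0∞) / (k + d : ℕ) := by
  have hd' : (0 : ℝ) < d := by exact_mod_cast hd
  rw [agreeBound, ENNReal.ofReal_div_of_pos (by positivity), ENNReal.ofReal_sub _ (by positivity),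
    ENNReal.ofReal_div_of_pos hd', ← Nat.cast_add]
  simp only [ENNReal.ofReal_one, ENNReal.ofReal_natCast]

theorem IsDegenerate.pdim_le [Fintype V] {k d l : ℕ} (hG : IsDegenerate G k) (hkd : k ≤ d)
    (hd : 0 < d) (hl : (1 - agreeBound k d) ^ l * Fintype.card V ^ 2 < 1) : pdim G ≤ l + 1 := by
  obtain ⟨hp₀, hp₁⟩ :=
    agreeBound_mem_Icc k.cast_nonneg (Nat.cast_le.2 hkd) (Nat.one_le_cast.2 hd)
  have hl' : (1 - (1 - k / d : ℝ≥0∞) / Fintype.card (Fin (k + d))) ^ l * Fintype.card V ^ 2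
      < 1 := by
    rw [Fintype.card_fin, ← ofReal_agreeBound hd, ← ENNReal.ofReal_one, ← ENNReal.ofReal_sub _ hp₀,
      ← ENNReal.ofReal_natCast, ← ENNReal.ofReal_pow (sub_nonneg.2 hp₁),
      ← ENNReal.ofReal_pow (by positivity), ← ENNReal.ofReal_mul (pow_nonneg (sub_nonneg.2 hp₁) l)]
    exact (ENNReal.ofReal_lt_ofReal_iff one_pos).2 hl
  obtain ⟨c, hc⟩ := hG.exists_colorings_cover hd (Fintype.card_fin (k + d)).ge hl'
  exact pdim_le_succ_of_colorings c hc

end ProductDimension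

section Numerics

theorem pow_ceil_mul_logb_mul_sq_lt_one {q a n : ℝ} (hq₀ : 0 ≤ q) (hq₁ : q ≤ 1) (ha : 0 ≤ a)
    (hqa : q ^ a < 1 / 4) (hn : 1 < n) : q ^ ⌈a * Real.logb 2 n⌉₊ * n ^ 2 < 1 := by
  have hn₀ : 0 < n := by linarith
  have hlog : 0 < Real.logb 2 n := Real.logb_pos one_lt_two hn
  have hquarter : (1 / 4 : ℝ) ^ Real.logb 2 n * n ^ 2 = 1 := by
    have h : (1 / 4 : ℝ) = 2 ^ (-2 : ℝ) := by rw [Real.rpow_neg] <;> norm_num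
    rw [h, ← Real.rpow_mul zero_le_two, mul_comm (-2), Real.rpow_mul zero_le_two,
      Real.rpow_logb two_pos (by norm_num) hn₀, Real.rpow_neg hn₀.le, Real.rpow_two]
    exact inv_mul_cancel₀ (by positivity)
  calc q ^ ⌈a * Real.logb 2 n⌉₊ * n ^ 2
      ≤ (q ^ a) ^ Real.logb 2 n * n ^ 2 := by
        rw [← Real.rpow_mul hq₀, ← Real.rpow_natCast]
        gcongr ?_ * _
        exact Real.rpow_le_rpow_of_exponent_ge' hq₀ hq₁ (by positivity) (Nat.le_ceil _)
    _ < (1 / 4) ^ Real.logb 2 n * n ^ 2 := by gcongr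
    _ = 1 := hquarter

theorem inv_le_agreeBound {k x : ℝ} (hk : 0 < k) (h₁ : k ≤ 3 * x) (h₂ : 2 * x ≤ k) :
    1 / (5.9 * k) ≤ agreeBound k (2 * k + x) := by
  have hd : 0 < 2 * k + x := by linarith
  rw [agreeBound, one_sub_div hd.ne', div_div, div_le_div_iff₀ (by positivity) (by positivity)]
  nlinarith

theorem five_sixths_rpow_lt : (5 / 6 : ℝ) ^ (8.317 : ℝ) < 1 / 4 := by
  calc (5 / 6 : ℝ) ^ (8.317 : ℝ) ≤ (5 / 6 : ℝ) ^ (8 : ℝ) :=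
        Real.rpow_le_rpow_of_exponent_ge (by norm_num) (by norm_num) (by norm_num)
    _ < 1 / 4 := by norm_num

theorem rpow_lt_quarter_of_le {q k : ℝ} (hk : 0 < k) (hq₀ : 0 ≤ q)
    (hq : q ≤ 1 - 1 / (5.9 * k)) : q ^ (8.317 * k) < 1 / 4 := by
  have hexp : q ≤ Real.exp (-(1 / (5.9 * k))) := hq.trans (Real.one_sub_le_exp_neg _)
  have hlog : -(8.317 / 5.9) < Real.log (1 / 4) := by
    have h : Real.log (1 / 4) = -(2 * Real.log 2) := by
      rw [one_div, Real.log_inv, ← Real.log_rpow two_pos]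
      norm_num
    linarith [Real.log_two_lt_d9]
  calc q ^ (8.317 * k) ≤ Real.exp (-(1 / (5.9 * k))) ^ (8.317 * k) := by gcongr
    _ = Real.exp (-(8.317 / 5.9)) := by
        rw [← Real.exp_mul]
        congr 1
        field_simp
    _ < 1 / 4 := (Real.lt_log_iff_exp_lt (by norm_num)).1 hlog

/- `agreeBound k d` is largest at `d = (1 + √2) k`, where it is about `1 / (5.83 k)`; hence the
choice `d = ⌊5 k / 2⌋`. For `k = 1` it is only `1 / 6`, and `1 - p ≤ exp (-p)` would lose too
much. -/
theorem exists_one_sub_agreeBound_rpow_lt {k : ℕ} (hk : 1 ≤ k) :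
    ∃ d : ℕ, k ≤ d ∧ (1 - agreeBound k d) ^ (8.317 * k : ℝ) < 1 / 4 := by
  obtain rfl | hk₂ := hk.eq_or_lt
  · refine ⟨2, one_le_two, ?_⟩
    have h : 1 - agreeBound (1 : ℕ) (2 : ℕ) = 5 / 6 := by norm_num [agreeBound]
    rw [h, Nat.cast_one, mul_one]
    exact five_sixths_rpow_lt
  · have hk₀ : (0 : ℝ) < k := by positivity
    have hkd : k ≤ 2 * k + k / 2 := by lia
    have hp : 1 / (5.9 * k) ≤ agreeBound k (2 * k + k / 2 : ℕ) := by
      push_cast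
      exact inv_le_agreeBound hk₀ (by norm_cast; lia) (by norm_cast; lia)
    have hp₁ := (agreeBound_mem_Icc hk₀.le (Nat.cast_le.2 hkd) (Nat.one_le_cast.2 (by lia))).2
    exact ⟨2 * k + k / 2, hkd, rpow_lt_quarter_of_le hk₀ (sub_nonneg.2 hp₁) (by linarith)⟩

end Numerics

/-- Every `k`-degenerate graph on `n ≥ 2` vertices (`k ≥ 1`) has product
dimension at most `⌈8.317 k log₂ n⌉ + 1`.  (`k`-degenerate: every nonempty subgraph has
a vertex of degree at most `k`.) -/
theorem pdim_degenerate {V : Type*} [Fintype V] (G : SimpleGraph V) (k : ℕ)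
    (hk : 1 ≤ k)
    (hdegen : ∀ s : Finset V, s.Nonempty →
      ∃ v ∈ s, (s.filter (fun u => G.Adj v u)).card ≤ k)
    (hn : 2 ≤ Fintype.card V) :
    pdim G ≤ ⌈8.317 * k * Real.logb 2 (Fintype.card V)⌉₊ + 1 := by
  have hG : IsDegenerate G k := hdegen
  obtain ⟨d, hkd, hq⟩ := exists_one_sub_agreeBound_rpow_lt hk
  have hd : 0 < d := by lia
  obtain ⟨hp₀, hp₁⟩ :=
    agreeBound_mem_Icc k.cast_nonneg (Nat.cast_le.2 hkd) (Nat.one_le_cast.2 hd)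
  have hn' : (1 : ℝ) < Fintype.card V := by exact_mod_cast hn
  exact hG.pdim_le hkd hd <| pow_ceil_mul_logb_mul_sq_lt_one (sub_nonneg.2 hp₁)
    (sub_le_self 1 hp₀) (by positivity) hq hn'
end
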